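/- arXiv:1909.06193 — 2 statements merged into one kernel-verified Lean document; each statement's English description precedes it below -/
import Mathlib

section
/- (Proposition 2.) Given two Borel probability measures μ and ν on Q^d with Fourier–Stieltjes transforms f_μ and f_ν, for any t > 0 one has W̃₁(μ,ν) ≤ ( Σ_{m ∈ ℤ^d, m ≠ 0} (1/|m|²) e^{−2|m|²t} |f_μ(m) − f_ν(m)|² )^{1/2} + 2√(2dt). Moreover, the same inequality holds with W₁(μ,ν) in place of W̃₁(μ,ν) if μ and ν are supported on [0,π]^d. -/
open MeasureTheory Real ENNReal

noncomputable section

/-- The cube `Q^d = (−π, π]^d`. -/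
def Qcube (d : ℕ) : Set (Fin d → ℝ) := {x | ∀ i, x i ∈ Set.Ioc (-π) π}

/-- Euclidean distance on `Fin d → ℝ`. -/
def euclidDist {d : ℕ} (x y : Fin d → ℝ) : ℝ := Real.sqrt (∑ i, (x i - y i) ^ 2)

/-- The one-dimensional torus distance on `(−π,π]`. -/
def rhoCircle (s t : ℝ) : ℝ := min |s - t| (2 * π - |s - t|)

/-- The geodesic distance on the torus `Q^d = (−π,π]^d`. -/
def rhoTorus {d : ℕ} (x y : Fin d → ℝ) : ℝ :=
  Real.sqrt (∑ i, rhoCircle (x i) (y i) ^ 2)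

/-- `γ` is a coupling of `μ` and `ν`. -/
def IsCoupling {α : Type*} [MeasurableSpace α]
    (γ : Measure (α × α)) (μ ν : Measure α) : Prop :=
  γ.map Prod.fst = μ ∧ γ.map Prod.snd = ν

/-- Optimal transport cost for a cost function `c`. -/
def transportCost {α : Type*} [MeasurableSpace α] (c : α → α → ℝ)
    (μ ν : Measure α) : ℝ≥0∞ :=
  ⨅ (γ : Measure (α × α)) (_ : IsCoupling γ μ ν),
    ∫⁻ p, ENNReal.ofReal (c p.1 p.2) ∂γ

/-- Euclidean Kantorovich distance `W₁`. -/
def W1 {d : ℕ} (μ ν : Measure (Fin d → ℝ)) : ℝ≥0∞ := transportCost euclidDist μ ν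

/-- Torus Kantorovich distance `W̃₁`. -/
def W1tilde {d : ℕ} (μ ν : Measure (Fin d → ℝ)) : ℝ≥0∞ := transportCost rhoTorus μ ν

/-- Fourier–Stieltjes transform `f_μ(m) = ∫ e^{i⟨m,x⟩} dμ(x)`, `m ∈ ℤ^d`. -/
def fourierStieltjes {d : ℕ} (μ : Measure (Fin d → ℝ)) (m : Fin d → ℤ) : ℂ :=
  ∫ x, Complex.exp (Complex.I * ∑ i, (m i : ℂ) * (x i : ℂ)) ∂μ

/-!
By Kantorovich duality on the compact torus it suffices to bound `∫ F dμ - ∫ F dν` for `F` that is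
1-Lipschitz in the geodesic distance. Averaging the translates of `F` over a wrapped Gaussian of
covariance `2t` moves each of the two integrals by at most the mean length of the Gaussian vector,
which is at most `√(2dt)`, and multiplies the `m`-th Fourier coefficient of `F` by `e^{-t|m|²}`. The
Fourier series of the averaged function converges absolutely, so the remaining difference is
`∑ F̂(m) e^{-t|m|²} (f_μ(m) - f_ν(m))`. Cauchy–Schwarz bounds it because `∑ |m|² |F̂(m)|² ≤ 1`: the
sum is at most `∫ |∇F|²` by Bessel's inequality for the difference quotients of `F`, whose limits
exist almost everywhere by Rademacher's theorem.
-/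

section PositiveExtension

variable {E P : Type*} [AddCommGroup E] [PartialOrder E] [IsOrderedAddMonoid E] [Module ℝ E]
  [AddCommGroup P] [Module ℝ P]

/-- The cone of pairs `(h, r)` on which `(h, r) ↦ L h + r` is nonnegative whenever `L` is positive,
`L ∘ S = J` and `L c ≤ V`. -/
def dualityCone [PosSMulMono ℝ E] (S : P →ₗ[ℝ] E) (J : P →ₗ[ℝ] ℝ) (c : E) (V : ℝ) :
    PointedCone ℝ (E × ℝ) where
  carrier := {x | ∃ (p : P) (l : ℝ), 0 ≤ l ∧ S p - l • c ≤ x.1 ∧ l * V - J p ≤ x.2}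
  zero_mem' := ⟨0, 0, le_rfl, by simp, by simp⟩
  add_mem' := by
    rintro x y ⟨p, l, hl, hxE, hxR⟩ ⟨q, k, hk, hyE, hyR⟩
    refine ⟨p + q, l + k, add_nonneg hl hk, (add_le_add hxE hyE).trans' (le_of_eq ?_),
      (add_le_add hxR hyR).trans' (le_of_eq ?_)⟩
    · rw [map_add, add_smul]; abel
    · rw [map_add]; ring
  smul_mem' := by
    rintro ⟨a, ha⟩ x ⟨p, l, hl, hxE, hxR⟩
    refine ⟨a • p, a * l, mul_nonneg ha hl,
      (smul_le_smul_of_nonneg_left hxE ha).trans' (le_of_eq ?_),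
      (mul_le_mul_of_nonneg_left hxR ha).trans' (le_of_eq ?_)⟩
    · rw [map_smul, smul_sub, smul_smul]
    · rw [map_smul, smul_eq_mul]; ring

variable [PosSMulMono ℝ E] {S : P →ₗ[ℝ] E} {J : P →ₗ[ℝ] ℝ} {c : E} {V : ℝ}

theorem le_mul_of_map_le_smul (hJ : ∀ p, 0 ≤ S p → 0 ≤ J p) (hV : ∀ p, S p ≤ c → J p ≤ V)
    {p : P} {l : ℝ} (hl : 0 ≤ l) (hp : S p ≤ l • c) : J p ≤ l * V := by
  rcases hl.eq_or_lt with rfl | hl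
  · have := hJ (-p) (by simpa using hp)
    simpa using this
  · have := hV (l⁻¹ • p) (by
      simpa [smul_smul, hl.ne'] using smul_le_smul_of_nonneg_left hp (inv_nonneg.2 hl.le))
    rwa [map_smul, smul_eq_mul, inv_mul_le_iff₀ hl] at this

theorem exists_positive_extension_apply_le (hS : ∀ h, ∃ p, h ≤ S p)
    (hJ : ∀ p, 0 ≤ S p → 0 ≤ J p) (hV : ∀ p, S p ≤ c → J p ≤ V) :
    ∃ L : E →ₗ[ℝ] ℝ, (∀ h, 0 ≤ h → 0 ≤ L h) ∧ (∀ p, L (S p) = J p) ∧ L c ≤ V := by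
  obtain ⟨g, hg_snd, hg_nonneg⟩ := riesz_extension (dualityCone S J c V)
    ((LinearMap.snd ℝ E ℝ).toPMap (LinearMap.range (LinearMap.inr ℝ E ℝ)))
    (by
      rintro ⟨_, r, rfl⟩ ⟨p, l, hl, hE, hR⟩
      have := le_mul_of_map_le_smul hJ hV hl (sub_nonpos.1 hE)
      exact (sub_nonneg.2 this).trans hR)
    (by
      rintro ⟨h, r⟩
      obtain ⟨p, hp⟩ := hS (-h)
      refine ⟨⟨(0, J p - r), J p - r, rfl⟩, -p, 0, le_rfl, ?_, ?_⟩
      · simpa using neg_le.1 hp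
      · simp)
  have hg : ∀ h r, g (h, r) = g (h, 0) + r := fun h r ↦ by
    have : g (0, r) = r := hg_snd ⟨(0, r), r, rfl⟩
    conv_rhs => rw [← this, ← map_add]
    simp
  have hg_le : ∀ p, J p ≤ g (S p, 0) := fun p ↦ by
    have := hg_nonneg (S p, -J p) ⟨p, 0, le_rfl, by simp, by simp⟩
    rw [hg] at this
    linarith
  refine ⟨g ∘ₗ LinearMap.inl ℝ E ℝ, fun h hh ↦ hg_nonneg _ ⟨0, 0, le_rfl, by simpa, by simp⟩,
    fun p ↦ le_antisymm ?_ (hg_le p), ?_⟩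
  · have := hg_le (-p)
    have hneg : g (S (-p), 0) = -g (S p, 0) := by rw [← map_neg]; simp
    rw [hneg, map_neg] at this
    exact neg_le_neg_iff.1 this
  · have := hg_nonneg (-c, V) ⟨0, 1, zero_le_one, by simp, by simp⟩
    have hneg : g (-c, 0) = -g (c, 0) := by rw [← map_neg]; simp
    rw [hg, hneg] at this
    change g (c, 0) ≤ V
    linarith

end PositiveExtension

section KantorovichDuality

open scoped CompactlySupported

variable {X Y : Type*} [TopologicalSpace X] [TopologicalSpace Y]

/-- The linear map `(φ, ψ) ↦ φ ⊕ ψ`, where `(φ ⊕ ψ) (x, y) = φ x + ψ y`. -/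
def outerSum : C(X, ℝ) × C(Y, ℝ) →ₗ[ℝ] C(X × Y, ℝ) where
  toFun p := p.1.comp ContinuousMap.fst + p.2.comp ContinuousMap.snd
  map_add' p q := by
    ext
    exact add_add_add_comm _ _ _ _
  map_smul' a p := by ext; simp

theorem outerSum_apply (p : C(X, ℝ) × C(Y, ℝ)) (z : X × Y) :
    outerSum p z = p.1 z.1 + p.2 z.2 :=
  rfl

variable [CompactSpace X] [MeasurableSpace X] [CompactSpace Y] [MeasurableSpace Y]

theorem integrable_continuousMap [OpensMeasurableSpace X] {E : Type*} [NormedAddCommGroup E]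
    (μ : Measure X) [IsFiniteMeasure μ] (φ : C(X, E)) : Integrable φ μ :=
  φ.continuous.integrable_of_hasCompactSupport (HasCompactSupport.of_compactSpace φ)

theorem exists_isFiniteMeasure_integral_eq [T2Space X] [BorelSpace X] (L : C(X, ℝ) →ₗ[ℝ] ℝ)
    (hL : ∀ φ, 0 ≤ φ → 0 ≤ L φ) :
    ∃ γ : Measure X, IsFiniteMeasure γ ∧ ∀ φ : C(X, ℝ), ∫ x, φ x ∂γ = L φ := by
  let Λ : C_c(X, ℝ) →ₚ[ℝ] ℝ := PositiveLinearMap.mk₀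
    { toFun := fun f ↦ L f.toContinuousMap
      map_add' := fun f g ↦ L.map_add f.toContinuousMap g.toContinuousMap
      map_smul' := fun a f ↦ L.map_smul a f.toContinuousMap } fun f hf ↦ hL _ hf
  refine ⟨RealRMK.rieszMeasure Λ, ⟨isCompact_univ.measure_lt_top⟩, fun φ ↦ ?_⟩
  exact RealRMK.integral_rieszMeasure Λ ⟨φ, HasCompactSupport.of_compactSpace _⟩

/-- The objective `(φ, ψ) ↦ ∫ φ dμ + ∫ ψ dν` of the dual transport problem. -/
def dualObjective [OpensMeasurableSpace X] [OpensMeasurableSpace Y] (μ : Measure X) (ν : Measure Y)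
    [IsFiniteMeasure μ] [IsFiniteMeasure ν] :
    C(X, ℝ) × C(Y, ℝ) →ₗ[ℝ] ℝ where
  toFun p := ∫ x, p.1 x ∂μ + ∫ y, p.2 y ∂ν
  map_add' p q := by
    have hX := integral_add (integrable_continuousMap μ p.1) (integrable_continuousMap μ q.1)
    have hY := integral_add (integrable_continuousMap ν p.2) (integrable_continuousMap ν q.2)
    simp only [Prod.fst_add, Prod.snd_add, ContinuousMap.add_apply, hX, hY]
    ring
  map_smul' a p := by
    simp only [Prod.smul_fst, Prod.smul_snd, ContinuousMap.smul_apply, integral_smul, smul_add,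
      RingHom.id_apply]

theorem dualObjective_apply [OpensMeasurableSpace X] [OpensMeasurableSpace Y] (μ : Measure X)
    (ν : Measure Y) [IsFiniteMeasure μ] [IsFiniteMeasure ν] (p : C(X, ℝ) × C(Y, ℝ)) :
    dualObjective μ ν p = ∫ x, p.1 x ∂μ + ∫ y, p.2 y ∂ν :=
  rfl

theorem dualObjective_nonneg [OpensMeasurableSpace X] [OpensMeasurableSpace Y] {μ : Measure X}
    {ν : Measure Y} [IsProbabilityMeasure μ] [IsProbabilityMeasure ν] {p : C(X, ℝ) × C(Y, ℝ)}
    (hp : 0 ≤ outerSum p) :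
    0 ≤ dualObjective μ ν p := by
  have hfst := (integrable_continuousMap μ p.1).comp_fst ν
  have hsnd := (integrable_continuousMap ν p.2).comp_snd μ
  calc 0 ≤ ∫ z, p.1 z.1 + p.2 z.2 ∂μ.prod ν := integral_nonneg hp
    _ = dualObjective μ ν p := by
      rw [integral_add hfst hsnd, integral_fun_fst, integral_fun_snd, dualObjective_apply]
      simp

theorem exists_coupling_integral_le [T2Space X] [T2Space Y] [SecondCountableTopology X]
    [SecondCountableTopology Y] [BorelSpace X] [BorelSpace Y] (μ : Measure X) (ν : Measure Y)
    [IsProbabilityMeasure μ] [IsProbabilityMeasure ν] {c : C(X × Y, ℝ)} {V : ℝ}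
    (hV : ∀ p, outerSum p ≤ c → dualObjective μ ν p ≤ V) :
    ∃ γ : Measure (X × Y), IsFiniteMeasure γ ∧ γ.map Prod.fst = μ ∧ γ.map Prod.snd = ν ∧
      ∫ z, c z ∂γ ≤ V := by
  have outerSum_dominates : ∀ h : C(X × Y, ℝ), ∃ p, h ≤ outerSum p := fun h ↦
    ⟨(ContinuousMap.const X ‖h‖, 0), fun z ↦ by
      simpa [outerSum_apply] using (le_abs_self _).trans (h.norm_coe_le_norm z)⟩
  obtain ⟨L, hL_nonneg, hL_outerSum, hLV⟩ := exists_positive_extension_apply_le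
    outerSum_dominates (fun _ ↦ dualObjective_nonneg (μ := μ) (ν := ν)) hV
  obtain ⟨γ, hγ_finite, hγ⟩ := exists_isFiniteMeasure_integral_eq L hL_nonneg
  refine ⟨γ, hγ_finite, ?_, ?_, (hγ c).trans_le hLV⟩
  · refine ext_of_forall_integral_eq_of_IsFiniteMeasure fun φ ↦ ?_
    rw [integral_map measurable_fst.aemeasurable φ.continuous.aestronglyMeasurable]
    have := (hγ _).trans (hL_outerSum (φ.toContinuousMap, 0))
    simpa [outerSum_apply, dualObjective_apply] using this
  · refine ext_of_forall_integral_eq_of_IsFiniteMeasure fun ψ ↦ ?_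
    rw [integral_map measurable_snd.aemeasurable ψ.continuous.aestronglyMeasurable]
    have := (hγ _).trans (hL_outerSum (0, ψ.toContinuousMap))
    simpa [outerSum_apply, dualObjective_apply] using this

end KantorovichDuality

section KantorovichRubinstein

variable {X : Type*}

/-- `F` is 1-Lipschitz for the cost `c`. When `c` is symmetric this bounds `|F x - F y|`. -/
def CostLipschitz (c : X × X → ℝ) (F : X → ℝ) : Prop := ∀ x y, F x - F y ≤ c (x, y)

theorem CostLipschitz.abs_sub_le {c : X × X → ℝ} {F : X → ℝ} (hF : CostLipschitz c F)
    (hsymm : ∀ x y, c (x, y) = c (y, x)) (x y : X) : |F x - F y| ≤ c (x, y) :=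
  abs_sub_le_iff.2 ⟨hF x y, (hF y x).trans_eq (hsymm y x)⟩

theorem CostLipschitz.continuous [TopologicalSpace X] {c : C(X × X, ℝ)} {F : X → ℝ}
    (hF : CostLipschitz c F) (hdiag : ∀ x, c (x, x) = 0) (hsymm : ∀ x y, c (x, y) = c (y, x)) :
    Continuous F := by
  refine continuous_iff_continuousAt.2 fun x ↦ tendsto_iff_dist_tendsto_zero.2 ?_
  have hlim : Filter.Tendsto (fun y ↦ c (y, x)) (nhds x) (nhds 0) := by
    have : Continuous fun y ↦ c (y, x) := by fun_prop
    simpa only [hdiag] using this.tendsto x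
  exact squeeze_zero (fun _ ↦ dist_nonneg) (fun y ↦ hF.abs_sub_le hsymm y x) hlim

/-- The `c`-transform of a potential: the largest `φ` with `φ x + ψ y ≤ c (x, y)`. -/
def cTransform (c : X × X → ℝ) (ψ : X → ℝ) (x : X) : ℝ := ⨅ y, c (x, y) - ψ y

variable {c : X × X → ℝ} {φ ψ : X → ℝ}

theorem le_cTransform [Nonempty X] (h : ∀ x y, φ x + ψ y ≤ c (x, y)) (x : X) :
    φ x ≤ cTransform c ψ x :=
  le_ciInf fun y ↦ le_sub_iff_add_le.2 (h x y)

theorem cTransform_le (h : ∀ x y, φ x + ψ y ≤ c (x, y)) (x y : X) :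
    cTransform c ψ x ≤ c (x, y) - ψ y :=
  ciInf_le ⟨φ x, Set.forall_mem_range.2 fun y ↦ le_sub_iff_add_le.2 (h x y)⟩ y

theorem costLipschitz_cTransform [Nonempty X] (h : ∀ x y, φ x + ψ y ≤ c (x, y))
    (htri : ∀ x y z, c (x, z) ≤ c (x, y) + c (y, z)) : CostLipschitz c (cTransform c ψ) := by
  intro x y
  rw [sub_le_comm]
  refine le_ciInf fun z ↦ ?_
  linarith [cTransform_le h x z, htri x y z]

variable [TopologicalSpace X] [MeasurableSpace X] [CompactSpace X]

theorem dualObjective_le_of_costLipschitz [OpensMeasurableSpace X] {μ ν : Measure X}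
    [IsProbabilityMeasure μ] [IsProbabilityMeasure ν] {c : C(X × X, ℝ)} (hdiag : ∀ x, c (x, x) = 0)
    (hsymm : ∀ x y, c (x, y) = c (y, x)) (htri : ∀ x y z, c (x, z) ≤ c (x, y) + c (y, z)) {V : ℝ}
    (hV : ∀ F : C(X, ℝ), CostLipschitz c F → ∫ x, F x ∂μ - ∫ x, F x ∂ν ≤ V)
    {φ ψ : C(X, ℝ)} (h : ∀ x y, φ x + ψ y ≤ c (x, y)) : dualObjective μ ν (φ, ψ) ≤ V := by
  have : Nonempty X := nonempty_of_isProbabilityMeasure μ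
  have hLip := costLipschitz_cTransform h htri
  let F : C(X, ℝ) := ⟨cTransform c ψ, hLip.continuous hdiag hsymm⟩
  have hφ : ∫ x, φ x ∂μ ≤ ∫ x, F x ∂μ :=
    integral_mono (integrable_continuousMap μ φ) (integrable_continuousMap μ F) (le_cTransform h)
  have hψ : ∫ x, ψ x ∂ν ≤ ∫ x, (-F) x ∂ν := by
    refine integral_mono (integrable_continuousMap ν ψ) (integrable_continuousMap ν (-F)) ?_
    intro x
    have := cTransform_le h x x
    rw [hdiag, zero_sub] at this
    exact le_neg_of_le_neg this
  calc dualObjective μ ν (φ, ψ) ≤ ∫ x, F x ∂μ + ∫ x, (-F) x ∂ν := add_le_add hφ hψ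
    _ = ∫ x, F x ∂μ - ∫ x, F x ∂ν := by
      simp only [ContinuousMap.neg_apply, integral_neg, sub_eq_add_neg]
    _ ≤ V := hV F hLip

theorem transportCost_le_of_costLipschitz [T2Space X] [SecondCountableTopology X] [BorelSpace X]
    (μ ν : Measure X) [IsProbabilityMeasure μ] [IsProbabilityMeasure ν] {c : C(X × X, ℝ)}
    (hdiag : ∀ x, c (x, x) = 0) (hsymm : ∀ x y, c (x, y) = c (y, x))
    (htri : ∀ x y z, c (x, z) ≤ c (x, y) + c (y, z)) {V : ℝ}
    (hV : ∀ F : C(X, ℝ), CostLipschitz c F → ∫ x, F x ∂μ - ∫ x, F x ∂ν ≤ V) :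
    transportCost (fun x y ↦ c (x, y)) μ ν ≤ ENNReal.ofReal V := by
  obtain ⟨γ, _, hfst, hsnd, hcost⟩ := exists_coupling_integral_le μ ν fun p (hp : outerSum p ≤ c) ↦
    dualObjective_le_of_costLipschitz hdiag hsymm htri hV fun x y ↦ hp (x, y)
  have cost_nonneg : ∀ x y, 0 ≤ c (x, y) := fun x y ↦ by
    linarith [hdiag x, hsymm x y, htri x y x]
  calc transportCost (fun x y ↦ c (x, y)) μ ν ≤ ∫⁻ z, ENNReal.ofReal (c z) ∂γ :=
        iInf₂_le γ ⟨hfst, hsnd⟩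
    _ = ENNReal.ofReal (∫ z, c z ∂γ) := (ofReal_integral_eq_lintegral_ofReal
        (integrable_continuousMap γ c) (.of_forall fun z ↦ cost_nonneg z.1 z.2)).symm
    _ ≤ ENNReal.ofReal V := ENNReal.ofReal_le_ofReal hcost

end KantorovichRubinstein

section Transport

variable {α β : Type*} [MeasurableSpace α] [MeasurableSpace β]

theorem IsCoupling.map {γ : Measure (α × α)} {μ ν : Measure α} (hγ : IsCoupling γ μ ν)
    {f : α → β} (hf : Measurable f) :
    IsCoupling (γ.map (Prod.map f f)) (μ.map f) (ν.map f) := by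
  have hff := hf.prodMap hf
  constructor
  · rw [Measure.map_map measurable_fst hff, ← hγ.1, Measure.map_map hf measurable_fst]
    rfl
  · rw [Measure.map_map measurable_snd hff, ← hγ.2, Measure.map_map hf measurable_snd]
    rfl

theorem transportCost_map_le {f : α → β} (hf : Measurable f) {c : β → β → ℝ}
    (μ ν : Measure α) :
    transportCost c (μ.map f) (ν.map f) ≤ transportCost (fun x y ↦ c (f x) (f y)) μ ν :=
  le_iInf₂ fun γ hγ ↦ (iInf₂_le (γ.map (Prod.map f f)) (hγ.map hf)).trans
    (lintegral_map_le (fun p ↦ ENNReal.ofReal (c p.1 p.2)) (Prod.map f f))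

theorem transportCost_mono_on {c c' : α → α → ℝ} {μ ν : Measure α} {s : Set α}
    (hμ : μ sᶜ = 0) (hν : ν sᶜ = 0) (h : ∀ x ∈ s, ∀ y ∈ s, c x y ≤ c' x y) :
    transportCost c μ ν ≤ transportCost c' μ ν := by
  refine iInf₂_mono fun γ hγ ↦ lintegral_mono_ae ?_
  have hfst : ∀ᵐ p ∂γ, p.1 ∈ s := ae_of_ae_map measurable_fst.aemeasurable (by rwa [hγ.1])
  have hsnd : ∀ᵐ p ∂γ, p.2 ∈ s := ae_of_ae_map measurable_snd.aemeasurable (by rwa [hγ.2])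
  filter_upwards [hfst, hsnd] with p hp₁ hp₂
  exact ENNReal.ofReal_le_ofReal (h _ hp₁ _ hp₂)

end Transport

section Torus

variable {ι : Type*}

/-- The covering map of the torus by vectors of angles. Mathlib's torus has period `1`, so angles
are divided by `2π`. -/
def angleToTorus : (ι → ℝ) →+ UnitAddTorus ι where
  toFun x i := ((x i / (2 * π) : ℝ) : UnitAddCircle)
  map_zero' := by ext i; simp
  map_add' x y := by ext i; simp [add_div]

theorem angleToTorus_apply (x : ι → ℝ) (i : ι) :
    angleToTorus x i = ((x i / (2 * π) : ℝ) : UnitAddCircle) :=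
  rfl

@[fun_prop]
theorem continuous_angleToTorus : Continuous (angleToTorus (ι := ι)) :=
  continuous_pi fun i ↦ (AddCircle.continuous_mk' 1).comp ((continuous_apply i).div_const _)

/-- The section of `angleToTorus` with values in `(-π, π]`. -/
def angleLift (x : UnitAddTorus ι) : ι → ℝ :=
  fun i ↦ 2 * π * (AddCircle.equivIoc 1 (-(1 / 2)) (x i) : ℝ)

theorem angleLift_mem_Ioc (x : UnitAddTorus ι) (i : ι) : angleLift x i ∈ Set.Ioc (-π) π := by
  have h := (AddCircle.equivIoc 1 (-(1 / 2)) (x i)).2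
  constructor <;> unfold angleLift <;> nlinarith [h.1, h.2, pi_pos]

theorem angleToTorus_angleLift (x : UnitAddTorus ι) : angleToTorus (angleLift x) = x := by
  ext i
  rw [angleToTorus_apply, angleLift, mul_div_cancel_left₀ _ two_pi_pos.ne']
  exact (AddCircle.equivIoc 1 (-(1 / 2))).symm_apply_apply (x i)

theorem angleLift_angleToTorus {x : ι → ℝ} (hx : ∀ i, x i ∈ Set.Ioc (-π) π) :
    angleLift (angleToTorus x) = x := by
  funext i
  have hmem : x i / (2 * π) ∈ Set.Ioc (-(1 / 2) : ℝ) (-(1 / 2) + 1) := by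
    constructor
    · rw [lt_div_iff₀ two_pi_pos]; linarith [(hx i).1]
    · rw [div_le_iff₀ two_pi_pos]; linarith [(hx i).2]
  have hinv := (AddCircle.equivIoc 1 (-(1 / 2))).apply_symm_apply ⟨_, hmem⟩
  rw [angleLift, angleToTorus_apply]
  exact (congrArg (fun u : Set.Ioc _ _ ↦ 2 * π * (u : ℝ)) hinv).trans
    (mul_div_cancel₀ _ two_pi_pos.ne')

theorem measurable_angleLift : Measurable (angleLift (ι := ι)) :=
  measurable_pi_lambda _ fun i ↦ (measurable_subtype_coe.comp
    ((AddCircle.measurableEquivIoc 1 (-(1 / 2))).measurable.comp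
      (measurable_pi_apply i))).const_mul _

theorem map_angleLift_map_angleToTorus [Countable ι] {μ : Measure (ι → ℝ)}
    (hμ : ∀ᵐ x ∂μ, ∀ i, x i ∈ Set.Ioc (-π) π) : (μ.map angleToTorus).map angleLift = μ := by
  have hinv : angleLift ∘ angleToTorus =ᵐ[μ] id := hμ.mono fun x hx ↦ angleLift_angleToTorus hx
  rw [Measure.map_map measurable_angleLift continuous_angleToTorus.measurable,
    Measure.map_congr hinv, Measure.map_id]

theorem unitAddCircle_norm_coe_le (u : ℝ) : ‖(u : UnitAddCircle)‖ ≤ |u| := by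
  rw [UnitAddCircle.norm_eq]
  simpa using round_le u 0

theorem unitAddCircle_norm_coe_eq_min {u : ℝ} (hu : |u| < 1) :
    ‖(u : UnitAddCircle)‖ = min |u| (1 - |u|) := by
  have norm_coe_abs : ‖(u : UnitAddCircle)‖ = ‖((|u| : ℝ) : UnitAddCircle)‖ := by
    rcases abs_choice u with h | h <;> simp [h]
  rw [norm_coe_abs, UnitAddCircle.norm_eq, abs_sub_round_eq_min,
    Int.fract_eq_self.2 ⟨abs_nonneg u, hu⟩]

theorem rhoCircle_eq_norm {s t : ℝ} (h : |s - t| < 2 * π) :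
    rhoCircle s t = 2 * π * ‖(((s - t) / (2 * π) : ℝ) : UnitAddCircle)‖ := by
  have habs : |(s - t) / (2 * π)| = |s - t| / (2 * π) := by
    rw [abs_div, abs_of_pos two_pi_pos]
  rw [unitAddCircle_norm_coe_eq_min (by rwa [habs, div_lt_one two_pi_pos]), habs,
    mul_min_of_nonneg _ _ two_pi_pos.le, rhoCircle, mul_sub, mul_one,
    mul_div_cancel₀ _ two_pi_pos.ne']

variable [Fintype ι]

/-- The geodesic distance of the flat torus with circles of length `2π`. -/
def torusCost : C(UnitAddTorus ι × UnitAddTorus ι, ℝ) where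
  toFun z := 2 * π * dist (WithLp.toLp 2 z.1 : PiLp 2 fun _ : ι ↦ UnitAddCircle) (WithLp.toLp 2 z.2)
  continuous_toFun := by fun_prop

theorem torusCost_apply (x y : UnitAddTorus ι) :
    torusCost (x, y) = 2 * π * √(∑ i, ‖x i - y i‖ ^ 2) := by
  simp only [← dist_eq_norm]
  exact congrArg (2 * π * ·) (PiLp.dist_eq_of_L2 _ _)

theorem torusCost_self (x : UnitAddTorus ι) : torusCost (x, x) = 0 :=
  mul_eq_zero_of_right _ (dist_self _)

theorem torusCost_comm (x y : UnitAddTorus ι) : torusCost (x, y) = torusCost (y, x) :=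
  congrArg (2 * π * ·) (dist_comm _ _)

theorem torusCost_triangle (x y z : UnitAddTorus ι) :
    torusCost (x, z) ≤ torusCost (x, y) + torusCost (y, z) :=
  (mul_le_mul_of_nonneg_left (dist_triangle _ _ _) two_pi_pos.le).trans_eq (mul_add _ _ _)

theorem torusCost_nonneg (p : UnitAddTorus ι × UnitAddTorus ι) : 0 ≤ torusCost p :=
  mul_nonneg two_pi_pos.le dist_nonneg

theorem torusCost_self_add (x y : UnitAddTorus ι) : torusCost (x, x + y) = torusCost (0, y) := by
  simp [torusCost_apply]

theorem torusCost_zero_angleToTorus_le (v : EuclideanSpace ℝ ι) :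
    torusCost (0, angleToTorus v.ofLp) ≤ ‖v‖ := by
  have coord_le : ∀ i, ‖(0 : UnitAddTorus ι) i - angleToTorus v.ofLp i‖ ^ 2 ≤
      (v i) ^ 2 / (2 * π) ^ 2 := fun i ↦ by
    rw [Pi.zero_apply, zero_sub, norm_neg, ← div_pow, ← sq_abs (v i / _)]
    exact pow_le_pow_left₀ (norm_nonneg _) (unitAddCircle_norm_coe_le _) 2
  calc torusCost (0, angleToTorus v.ofLp)
      ≤ 2 * π * √(∑ i, (v i) ^ 2 / (2 * π) ^ 2) := by
        rw [torusCost_apply]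
        gcongr with i
        exact coord_le i
    _ = ‖v‖ := by
        rw [← Finset.sum_div, sqrt_div' _ (by positivity), sqrt_sq two_pi_pos.le,
          mul_div_cancel₀ _ two_pi_pos.ne', EuclideanSpace.norm_eq]
        simp

theorem rhoTorus_angleLift {d : ℕ} (x y : UnitAddTorus (Fin d)) :
    rhoTorus (angleLift x) (angleLift y) = torusCost (x, y) := by
  have coord_eq : ∀ i, rhoCircle (angleLift x i) (angleLift y i) = 2 * π * ‖x i - y i‖ := by
    intro i
    have hx := angleLift_mem_Ioc x i
    have hy := angleLift_mem_Ioc y i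
    have hdiff : |angleLift x i - angleLift y i| < 2 * π :=
      abs_lt.2 ⟨by linarith [hx.1, hy.2], by linarith [hx.2, hy.1]⟩
    have hcoe : (((angleLift x i - angleLift y i) / (2 * π) : ℝ) : UnitAddCircle) = x i - y i := by
      have := congrFun (map_sub angleToTorus (angleLift x) (angleLift y)) i
      rwa [angleToTorus_angleLift, angleToTorus_angleLift] at this
    rw [rhoCircle_eq_norm hdiff, hcoe]
  rw [rhoTorus, torusCost_apply]
  simp only [coord_eq, mul_pow _ ‖_‖, ← Finset.mul_sum]
  rw [sqrt_mul (by positivity), sqrt_sq two_pi_pos.le]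

theorem euclidDist_eq_rhoTorus {d : ℕ} {x y : Fin d → ℝ} (h : ∀ i, |x i - y i| ≤ π) :
    euclidDist x y = rhoTorus x y := by
  have coord_eq : ∀ i, rhoCircle (x i) (y i) = |x i - y i| := fun i ↦
    min_eq_left (by linarith [h i])
  simp only [euclidDist, rhoTorus, coord_eq, sq_abs]

theorem W1_le_W1tilde {d : ℕ} {μ ν : Measure (Fin d → ℝ)}
    (hμ : μ {x | ¬ ∀ i, x i ∈ Set.Icc (0 : ℝ) π} = 0)
    (hν : ν {x | ¬ ∀ i, x i ∈ Set.Icc (0 : ℝ) π} = 0) : W1 μ ν ≤ W1tilde μ ν :=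
  transportCost_mono_on hμ hν fun x hx y hy ↦ (euclidDist_eq_rhoTorus fun i ↦
    abs_sub_le_iff.2 ⟨by linarith [(hx i).2, (hy i).1], by linarith [(hy i).2, (hx i).1]⟩).le

theorem W1tilde_le_transportCost_torusCost {d : ℕ} {μ ν : Measure (Fin d → ℝ)}
    (hμ : μ (Qcube d)ᶜ = 0) (hν : ν (Qcube d)ᶜ = 0) :
    W1tilde μ ν ≤ transportCost (fun x y ↦ torusCost (x, y))
      (μ.map angleToTorus) (ν.map angleToTorus) := by
  simpa only [W1tilde, rhoTorus_angleLift, map_angleLift_map_angleToTorus hμ,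
    map_angleLift_map_angleToTorus hν] using transportCost_map_le (c := rhoTorus)
      measurable_angleLift (μ.map angleToTorus) (ν.map angleToTorus)

end Torus

section Fourier

open UnitAddTorus

/-- The normalised Haar measure on the circle, as in Mathlib's development of `mFourier`. -/
local instance : MeasureSpace UnitAddCircle := ⟨AddCircle.haarAddCircle⟩

local instance : Measure.IsAddHaarMeasure (volume : Measure UnitAddCircle) :=
  inferInstanceAs (Measure.IsAddHaarMeasure AddCircle.haarAddCircle)

local instance : IsProbabilityMeasure (volume : Measure UnitAddCircle) :=
  inferInstanceAs (IsProbabilityMeasure AddCircle.haarAddCircle)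

variable {ι : Type*} [Fintype ι]

theorem mFourier_apply_add (m : ι → ℤ) (x y : UnitAddTorus ι) :
    mFourier m (x + y) = mFourier m x * mFourier m y := by
  simp [mFourier, fourier_apply, smul_add, AddCircle.toCircle_add, Finset.prod_mul_distrib]

theorem norm_mFourier_apply (m : ι → ℤ) (x : UnitAddTorus ι) : ‖mFourier m x‖ = 1 := by
  simp only [mFourier, fourier_apply, ContinuousMap.coe_mk, norm_prod, Circle.norm_coe,
    Finset.prod_const_one]

theorem mFourier_angleToTorus (m : ι → ℤ) (x : ι → ℝ) :
    mFourier m (angleToTorus x) = Complex.exp (Complex.I * ∑ i, (m i : ℂ) * (x i : ℂ)) := by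
  have hπ : (π : ℂ) ≠ 0 := Complex.ofReal_ne_zero.2 pi_ne_zero
  simp only [mFourier, ContinuousMap.coe_mk, angleToTorus_apply, fourier_coe_apply,
    Finset.mul_sum, Complex.exp_sum]
  congr! 2
  push_cast
  field_simp

theorem mFourier_angleToTorus_single [DecidableEq ι] (m : ι → ℤ) (i : ι) (s : ℝ) :
    mFourier m (angleToTorus (Pi.single i s)) = Complex.exp (Complex.I * m i * s) := by
  rw [mFourier_angleToTorus, Finset.sum_eq_single i] <;> simp +contextual [mul_assoc]

theorem mFourierCoeff_translate (G : UnitAddTorus ι → ℂ) (h : UnitAddTorus ι) (m : ι → ℤ) :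
    mFourierCoeff (fun x ↦ G (x + h)) m = mFourier m h * mFourierCoeff G m := by
  have hinv : mFourier m h * mFourier (-m) h = 1 := by
    rw [← mFourier_add, add_neg_cancel, mFourier_zero, ContinuousMap.one_apply]
  simp only [mFourierCoeff]
  rw [← integral_const_mul,
    ← integral_add_right_eq_self (fun x ↦ mFourier m h * (mFourier (-m) x • G x)) h]
  congr with x
  simp only [mFourier_apply_add, smul_eq_mul]
  linear_combination (-mFourier (-m) x * G (x + h)) * hinv

theorem norm_mFourierCoeff_le (G : C(UnitAddTorus ι, ℂ)) (m : ι → ℤ) :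
    ‖mFourierCoeff G m‖ ≤ ‖G‖ := by
  have hbound : ∀ x, ‖mFourier (-m) x • G x‖ ≤ ‖G‖ := fun x ↦ by
    rw [norm_smul, norm_mFourier_apply, one_mul]
    exact G.norm_coe_le_norm x
  simpa [mFourierCoeff] using norm_integral_le_of_norm_le_const (μ := volume) (.of_forall hbound)

theorem sum_sq_norm_mFourierCoeff_le (G : C(UnitAddTorus ι, ℂ)) (A : Finset (ι → ℤ)) :
    ∑ m ∈ A, ‖mFourierCoeff G m‖ ^ 2 ≤ ∫ x, ‖G x‖ ^ 2 := by
  have hparseval := hasSum_sq_mFourierCoeff (ContinuousMap.toLp 2 volume ℂ G)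
  simp only [mFourierCoeff_toLp] at hparseval
  refine (sum_le_hasSum A (fun _ _ ↦ by positivity) hparseval).trans_eq (integral_congr_ae ?_)
  filter_upwards [ContinuousMap.coeFn_toLp (p := 2) (𝕜 := ℂ) volume G] with x hx
  rw [hx]

theorem sum_sq_norm_mFourier_sub_one_mul_le (G : C(UnitAddTorus ι, ℂ)) (h : UnitAddTorus ι)
    (A : Finset (ι → ℤ)) :
    ∑ m ∈ A, ‖mFourier m h - 1‖ ^ 2 * ‖mFourierCoeff G m‖ ^ 2 ≤ ∫ x, ‖G (x + h) - G x‖ ^ 2 := by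
  let Gh : C(UnitAddTorus ι, ℂ) := G.comp ⟨(· + h), by fun_prop⟩
  have coeff_sub : ∀ m, mFourierCoeff ⇑(Gh - G) m = (mFourier m h - 1) * mFourierCoeff G m := by
    intro m
    rw [sub_mul, one_mul, ← mFourierCoeff_translate]
    simp only [mFourierCoeff, ContinuousMap.coe_sub, Pi.sub_apply, smul_sub]
    exact integral_sub (integrable_continuousMap volume (mFourier (-m) * Gh))
      (integrable_continuousMap volume (mFourier (-m) * G))
  have hbessel := sum_sq_norm_mFourierCoeff_le (Gh - G) A
  simp only [coeff_sub, norm_mul, mul_pow] at hbessel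
  exact hbessel

/-- The Fourier–Stieltjes transform of a measure on the torus; for the image of a measure on
`(-π, π]^d` it agrees with `fourierStieltjes`. -/
def torusFourierStieltjes (μ : Measure (UnitAddTorus ι)) (m : ι → ℤ) : ℂ := ∫ x, mFourier m x ∂μ

theorem fourierStieltjes_eq_torusFourierStieltjes {d : ℕ} (μ : Measure (Fin d → ℝ))
    (m : Fin d → ℤ) : fourierStieltjes μ m = torusFourierStieltjes (μ.map angleToTorus) m := by
  rw [torusFourierStieltjes, integral_map continuous_angleToTorus.aemeasurable
    (mFourier m).continuous.aestronglyMeasurable]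
  simp only [fourierStieltjes, mFourier_angleToTorus]

theorem torusFourierStieltjes_zero (μ : Measure (UnitAddTorus ι)) [IsProbabilityMeasure μ] :
    torusFourierStieltjes μ 0 = 1 := by
  simp [torusFourierStieltjes, mFourier_zero]

theorem hasSum_mFourierCoeff_mul_torusFourierStieltjes (μ : Measure (UnitAddTorus ι))
    [IsFiniteMeasure μ] {G : C(UnitAddTorus ι, ℂ)} (hG : Summable (mFourierCoeff G)) :
    HasSum (fun m ↦ mFourierCoeff G m * torusFourierStieltjes μ m) (∫ x, G x ∂μ) := by
  have hterm := hasSum_integral_of_summable_integral_norm (μ := μ)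
    (fun m ↦ (integrable_continuousMap μ (mFourier m)).const_mul (mFourierCoeff G m)) (by
      simpa only [norm_mul, norm_mFourier_apply, mul_one, integral_const, smul_eq_mul] using
        hG.norm.mul_left (μ.real Set.univ))
  have hseries : ∀ x, ∑' m, mFourierCoeff G m * mFourier m x = G x := fun x ↦
    (hasSum_mFourier_series_apply_of_summable hG x).tsum_eq
  simpa only [integral_const_mul, hseries, torusFourierStieltjes] using hterm

open scoped Topology

/-- A real-valued continuous function, regarded as complex-valued. -/
def complexify {X : Type*} [TopologicalSpace X] (F : C(X, ℝ)) : C(X, ℂ) :=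
  ⟨fun x ↦ (F x : ℂ), by fun_prop⟩

theorem complexify_apply {X : Type*} [TopologicalSpace X] (F : C(X, ℝ)) (x : X) :
    complexify F x = (F x : ℂ) :=
  rfl

/-- The `2π`-periodic function on Euclidean space induced by a function on the torus. -/
def periodicLift (F : UnitAddTorus ι → ℝ) (v : EuclideanSpace ℝ ι) : ℝ :=
  F (angleToTorus v.ofLp)

theorem CostLipschitz.lipschitzWith_periodicLift {F : UnitAddTorus ι → ℝ}
    (hF : CostLipschitz torusCost F) : LipschitzWith 1 (periodicLift F) := by
  refine LipschitzWith.of_dist_le_mul fun v w ↦ ?_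
  have cost_eq : torusCost (angleToTorus v.ofLp, angleToTorus w.ofLp) =
      torusCost (0, angleToTorus (w - v).ofLp) := by
    rw [← torusCost_self_add (angleToTorus v.ofLp), ← map_add, WithLp.ofLp_sub, add_sub_cancel]
  calc dist (periodicLift F v) (periodicLift F w)
      ≤ torusCost (angleToTorus v.ofLp, angleToTorus w.ofLp) := hF.abs_sub_le torusCost_comm _ _
    _ ≤ ‖w - v‖ := cost_eq.trans_le (torusCost_zero_angleToTorus_le _)
    _ = (1 : NNReal) * dist v w := by rw [NNReal.coe_one, one_mul, dist_eq_norm, norm_sub_rev]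

theorem quasiMeasurePreserving_angleLift :
    Measure.QuasiMeasurePreserving
      (fun x : UnitAddTorus ι ↦ (WithLp.toLp 2 (angleLift x) : EuclideanSpace ℝ ι)) := by
  have hsubtype : Measure.QuasiMeasurePreserving
      (Subtype.val : {x : ι → ℝ // ∀ i, x i ∈ Set.Ioc (-(1 / 2) : ℝ) (-(1 / 2) + 1)} → ι → ℝ)
      (Measure.comap Subtype.val volume) volume := by
    have hmap := map_comap_subtype_coe (MeasurableSet.univ_pi' fun _ : ι ↦
      measurableSet_Ioc (a := (-(1 / 2) : ℝ)) (b := -(1 / 2) + 1)) volume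
    exact ⟨measurable_subtype_coe,
      Measure.absolutelyContinuous_of_le (hmap.trans_le Measure.restrict_le_self)⟩
  exact (PiLp.volume_preserving_toLp ι).quasiMeasurePreserving.comp
    ((Measure.quasiMeasurePreserving_smul volume two_pi_pos.ne').comp
      (hsubtype.comp (measurePreserving_equivPiIoc fun _ ↦ -(1 / 2)).quasiMeasurePreserving))

theorem tendsto_sum_sq_slope {f : EuclideanSpace ℝ ι → ℝ} {v : EuclideanSpace ℝ ι} [DecidableEq ι]
    (hf : DifferentiableAt ℝ f v) :
    Filter.Tendsto (fun s : ℝ ↦ ∑ i, ((f (v + s • EuclideanSpace.single i 1) - f v) / s) ^ 2)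
      (𝓝[≠] 0) (𝓝 (‖fderiv ℝ f v‖ ^ 2)) := by
  rw [(EuclideanSpace.basisFun ι ℝ).norm_dual]
  refine tendsto_finsetSum _ fun i _ ↦ Filter.Tendsto.pow ?_ 2
  have hslope := (hf.hasFDerivAt.hasLineDerivAt (EuclideanSpace.single i 1)).tendsto_slope_zero
  simpa [div_eq_inv_mul] using hslope

theorem tendsto_sq_norm_exp_sub_one_div_sq (k : ℂ) :
    Filter.Tendsto (fun s : ℝ ↦ ‖Complex.exp (k * s) - 1‖ ^ 2 / s ^ 2) (𝓝[≠] 0)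
      (𝓝 (‖k‖ ^ 2)) := by
  have hderiv : HasDerivAt (fun s : ℝ ↦ Complex.exp (k * s)) k 0 := by
    simpa using (((hasDerivAt_id (0 : ℝ)).ofReal_comp.const_mul k).cexp)
  refine (hderiv.tendsto_slope_zero.norm.pow 2).congr fun s ↦ ?_
  simp [mul_pow, div_eq_inv_mul]

section DifferenceQuotient

variable [DecidableEq ι]

/-- The squared norm of the gradient of `F` at `x`, with partial derivatives replaced by difference
quotients of step `s`. -/
def sqDiffQuotient (F : UnitAddTorus ι → ℝ) (s : ℝ) (x : UnitAddTorus ι) : ℝ :=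
  ∑ i, ((F (x + angleToTorus (Pi.single i s)) - F x) / s) ^ 2

theorem CostLipschitz.sq_diffQuotient_le_one {F : UnitAddTorus ι → ℝ}
    (hF : CostLipschitz torusCost F) (x : UnitAddTorus ι) (i : ι) (s : ℝ) :
    ((F (x + angleToTorus (Pi.single i s)) - F x) / s) ^ 2 ≤ 1 := by
  have hdiff : |F (x + angleToTorus (Pi.single i s)) - F x| ≤ |s| := by
    rw [abs_sub_comm]
    refine (hF.abs_sub_le torusCost_comm _ _).trans ?_
    rw [torusCost_self_add]
    simpa using torusCost_zero_angleToTorus_le (EuclideanSpace.single i s)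
  rw [sq_le_one_iff_abs_le_one, abs_div]
  exact div_le_one_of_le₀ hdiff (abs_nonneg s)

theorem sqDiffQuotient_eq_periodicLift (F : UnitAddTorus ι → ℝ) (s : ℝ) (x : UnitAddTorus ι) :
    sqDiffQuotient F s x =
      ∑ i, ((periodicLift F (WithLp.toLp 2 (angleLift x) + s • EuclideanSpace.single i 1) -
        periodicLift F (WithLp.toLp 2 (angleLift x))) / s) ^ 2 := by
  have shift_eq : ∀ i, angleToTorus
      (WithLp.toLp 2 (angleLift x) + s • EuclideanSpace.single i 1 : EuclideanSpace ℝ ι).ofLp =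
        x + angleToTorus (Pi.single i s) := fun i ↦ by
    rw [WithLp.ofLp_add, map_add, angleToTorus_angleLift, WithLp.ofLp_smul, PiLp.ofLp_single,
      ← Pi.single_smul, smul_eq_mul, mul_one]
  simp only [sqDiffQuotient, periodicLift, shift_eq, angleToTorus_angleLift]

theorem CostLipschitz.ae_tendsto_sqDiffQuotient {F : UnitAddTorus ι → ℝ}
    (hF : CostLipschitz torusCost F) :
    ∀ᵐ x, Filter.Tendsto (fun s ↦ sqDiffQuotient F s x) (𝓝[≠] 0)
      (𝓝 (‖fderiv ℝ (periodicLift F) (WithLp.toLp 2 (angleLift x))‖ ^ 2)) := by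
  simp only [sqDiffQuotient_eq_periodicLift]
  filter_upwards [quasiMeasurePreserving_angleLift.ae
    hF.lipschitzWith_periodicLift.ae_differentiableAt] with x hx
  exact tendsto_sum_sq_slope hx

theorem CostLipschitz.exists_tendsto_integral_sqDiffQuotient {F : C(UnitAddTorus ι, ℝ)}
    (hF : CostLipschitz torusCost F) :
    ∃ l ≤ 1, Filter.Tendsto (fun s ↦ ∫ x, sqDiffQuotient F s x) (𝓝[≠] 0) (𝓝 l) := by
  refine ⟨_, ?_, tendsto_integral_filter_of_dominated_convergence (fun _ ↦ Fintype.card ι)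
    (.of_forall fun s ↦ ?_) (.of_forall fun s ↦ .of_forall fun x ↦ ?_) (integrable_const _)
    hF.ae_tendsto_sqDiffQuotient⟩
  · have hgrad : ∀ v, ‖fderiv ℝ (periodicLift F) v‖ ^ 2 ≤ 1 := fun v ↦
      pow_le_one₀ (norm_nonneg _)
        (by simpa using norm_fderiv_le_of_lipschitz ℝ hF.lipschitzWith_periodicLift (x₀ := v))
    simpa using integral_mono_of_nonneg (μ := volume) (.of_forall fun x ↦ by positivity)
      (integrable_const (1 : ℝ))
      (.of_forall fun x : UnitAddTorus ι ↦ hgrad (WithLp.toLp 2 (angleLift x)))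
  · refine Continuous.aestronglyMeasurable ?_
    unfold sqDiffQuotient
    fun_prop
  · rw [sqDiffQuotient, norm_of_nonneg (Finset.sum_nonneg fun i _ ↦ sq_nonneg _)]
    simpa using Finset.sum_le_card_nsmul Finset.univ _ 1 fun i _ ↦ hF.sq_diffQuotient_le_one x i s

theorem sum_mul_sq_norm_mFourierCoeff_le_integral_sqDiffQuotient (F : C(UnitAddTorus ι, ℝ)) (s : ℝ)
    (A : Finset (ι → ℤ)) :
    ∑ m ∈ A, (∑ i, ‖Complex.exp (Complex.I * m i * s) - 1‖ ^ 2 / s ^ 2) *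
      ‖mFourierCoeff (complexify F) m‖ ^ 2 ≤ ∫ x, sqDiffQuotient F s x := by
  have bessel : ∀ i, ∑ m ∈ A, ‖Complex.exp (Complex.I * m i * s) - 1‖ ^ 2 *
      ‖mFourierCoeff (complexify F) m‖ ^ 2 ≤
        ∫ x, (F (x + angleToTorus (Pi.single i s)) - F x) ^ 2 := fun i ↦ by
    simpa only [mFourier_angleToTorus_single, complexify_apply, ← Complex.ofReal_sub,
      Complex.norm_real, norm_eq_abs, sq_abs] using
      sum_sq_norm_mFourier_sub_one_mul_le (complexify F) (angleToTorus (Pi.single i s)) A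
  calc _ = ∑ i, (∑ m ∈ A, ‖Complex.exp (Complex.I * m i * s) - 1‖ ^ 2 *
        ‖mFourierCoeff (complexify F) m‖ ^ 2) / s ^ 2 := by
        simp only [Finset.sum_mul, Finset.sum_div, div_mul_eq_mul_div]
        exact Finset.sum_comm
    _ ≤ ∑ i, (∫ x, (F (x + angleToTorus (Pi.single i s)) - F x) ^ 2) / s ^ 2 := by
        gcongr with i
        exact bessel i
    _ = ∫ x, sqDiffQuotient F s x := by
        simp only [sqDiffQuotient, div_pow]
        rw [integral_finsetSum _ fun i _ ↦ integrable_continuousMap volume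
          (⟨fun x ↦ (F (x + angleToTorus (Pi.single i s)) - F x) ^ 2 / s ^ 2, by fun_prop⟩ :
            C(UnitAddTorus ι, ℝ))]
        simp only [integral_div]

end DifferenceQuotient

/-- The squared Euclidean length of a frequency. -/
def freqSq (m : ι → ℤ) : ℝ := ∑ i, (m i : ℝ) ^ 2

theorem CostLipschitz.sum_freqSq_mul_sq_norm_mFourierCoeff_le_one {F : C(UnitAddTorus ι, ℝ)}
    (hF : CostLipschitz torusCost F) (A : Finset (ι → ℤ)) :
    ∑ m ∈ A, freqSq m * ‖mFourierCoeff (complexify F) m‖ ^ 2 ≤ 1 := by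
  classical
  obtain ⟨l, hl, hlim⟩ := hF.exists_tendsto_integral_sqDiffQuotient
  refine le_trans (le_of_tendsto_of_tendsto' ?_ hlim fun s ↦
    sum_mul_sq_norm_mFourierCoeff_le_integral_sqDiffQuotient F s A) hl
  refine tendsto_finsetSum _ fun m _ ↦ (tendsto_finsetSum _ fun i _ ↦ ?_).mul_const _
  simpa using tendsto_sq_norm_exp_sub_one_div_sq (Complex.I * m i)

section TranslateAverage

variable (κ : Measure (UnitAddTorus ι))

/-- The average of the translates of `G` with respect to `κ`, i.e. the convolution of `G` with the
reflection of `κ`; the heat semigroup acts in this way. -/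
def translateAverage [IsFiniteMeasure κ] (G : C(UnitAddTorus ι, ℂ)) : C(UnitAddTorus ι, ℂ) where
  toFun x := ∫ y, G (x + y) ∂κ
  continuous_toFun :=
    continuous_of_dominated (bound := fun _ ↦ ‖G‖)
      (fun x ↦ Continuous.aestronglyMeasurable (by fun_prop))
      (fun x ↦ .of_forall fun y ↦ G.norm_coe_le_norm (x + y)) (integrable_const _)
      (.of_forall fun y ↦ by fun_prop)

theorem translateAverage_apply [IsFiniteMeasure κ] (G : C(UnitAddTorus ι, ℂ))
    (x : UnitAddTorus ι) :
    translateAverage κ G x = ∫ y, G (x + y) ∂κ :=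
  rfl

theorem mFourierCoeff_translateAverage [IsFiniteMeasure κ] (G : C(UnitAddTorus ι, ℂ))
    (m : ι → ℤ) :
    mFourierCoeff (translateAverage κ G) m = mFourierCoeff G m * torusFourierStieltjes κ m := by
  calc mFourierCoeff (translateAverage κ G) m
      = ∫ x, ∫ y, mFourier (-m) x • G (x + y) ∂κ := by
        simp only [mFourierCoeff, translateAverage_apply, integral_smul]
    _ = ∫ y, mFourierCoeff (fun x ↦ G (x + y)) m ∂κ :=
        integral_integral_swap (integrable_continuousMap (volume.prod κ)
          ⟨fun p ↦ mFourier (-m) p.1 • G (p.1 + p.2), by fun_prop⟩)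
    _ = mFourierCoeff G m * torusFourierStieltjes κ m := by
        simp only [mFourierCoeff_translate, integral_mul_const, torusFourierStieltjes, mul_comm]

variable [IsProbabilityMeasure κ]

theorem CostLipschitz.norm_complexify_sub_translateAverage_le {F : C(UnitAddTorus ι, ℝ)}
    (hF : CostLipschitz torusCost F) (x : UnitAddTorus ι) :
    ‖complexify F x - translateAverage κ (complexify F) x‖ ≤ ∫ y, torusCost (0, y) ∂κ := by
  have hint : Integrable (fun y ↦ complexify F (x + y)) κ :=
    integrable_continuousMap κ ((complexify F).comp ⟨(x + ·), by fun_prop⟩)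
  have sub_eq : complexify F x - translateAverage κ (complexify F) x =
      ∫ y, (complexify F x - complexify F (x + y)) ∂κ := by
    rw [integral_sub (integrable_const _) hint, integral_const, probReal_univ, one_smul,
      translateAverage_apply]
  rw [sub_eq]
  refine norm_integral_le_of_norm_le
    (integrable_continuousMap κ (torusCost.comp ⟨fun y ↦ (0, y), by fun_prop⟩))
    (.of_forall fun y ↦ ?_)
  rw [complexify_apply, complexify_apply, ← Complex.ofReal_sub, Complex.norm_real]
  exact (hF.abs_sub_le torusCost_comm _ _).trans_eq (torusCost_self_add _ _)

theorem CostLipschitz.norm_integral_complexify_sub_integral_translateAverage_le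
    {F : C(UnitAddTorus ι, ℝ)} (hF : CostLipschitz torusCost F) (μ : Measure (UnitAddTorus ι))
    [IsProbabilityMeasure μ] :
    ‖∫ x, complexify F x ∂μ - ∫ x, translateAverage κ (complexify F) x ∂μ‖ ≤
      ∫ y, torusCost (0, y) ∂κ := by
  rw [← integral_sub (integrable_continuousMap μ _) (integrable_continuousMap μ _)]
  simpa using norm_integral_le_of_norm_le_const (μ := μ)
    (.of_forall (hF.norm_complexify_sub_translateAverage_le κ))

end TranslateAverage

section StdGaussian

open ProbabilityTheory

variable (E : Type*) [NormedAddCommGroup E] [InnerProductSpace ℝ E] [FiniteDimensional ℝ E]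
  [MeasurableSpace E] [BorelSpace E]

theorem integral_sq_norm_stdGaussian :
    ∫ g, ‖g‖ ^ 2 ∂stdGaussian E = Module.finrank ℝ E := by
  let b := stdOrthonormalBasis ℝ E
  have memLp_coord : ∀ i, MemLp (innerSL ℝ (b i)) 2 (stdGaussian E) := fun i ↦
    (innerSL ℝ (b i)).comp_memLp' IsGaussian.memLp_two_id
  have integral_coord : ∀ i, ∫ g, innerSL ℝ (b i) g ^ 2 ∂stdGaussian E = 1 := fun i ↦ by
    have hvar := variance_dual_stdGaussian (innerSL ℝ (b i))
    rwa [variance_of_integral_eq_zero (by fun_prop) (integral_strongDual_stdGaussian _),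
      innerSL_apply_norm, b.norm_eq_one, one_pow] at hvar
  have sq_norm_eq : ∀ g, ‖g‖ ^ 2 = ∑ i, innerSL ℝ (b i) g ^ 2 := fun g ↦ by
    simp [← b.sum_sq_norm_inner_right g]
  simp only [sq_norm_eq, integral_finsetSum _ fun i _ ↦ (memLp_coord i).integrable_sq,
    integral_coord, Finset.sum_const, Finset.card_univ, Fintype.card_fin, nsmul_eq_mul, mul_one]

theorem integral_norm_stdGaussian_le : ∫ g, ‖g‖ ∂stdGaussian E ≤ √(Module.finrank ℝ E) := by
  refine le_sqrt_of_sq_le ?_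
  rw [← integral_sq_norm_stdGaussian, ← sub_nonneg]
  have hvar := variance_eq_sub (IsGaussian.memLp_two_id (μ := stdGaussian E)).norm
  exact (variance_nonneg _ _).trans_eq hvar

end StdGaussian

section HeatMeasure

open ProbabilityTheory

/-- The heat kernel measure on the torus at time `t`: the Gaussian of covariance `2t` on Euclidean
space, wrapped around. For `t < 0` it is a Dirac mass, since then `√(2 * t) = 0`. -/
def heatMeasure (ι : Type*) [Fintype ι] (t : ℝ) : Measure (UnitAddTorus ι) :=
  (stdGaussian (EuclideanSpace ℝ ι)).map fun g ↦ angleToTorus (√(2 * t) • g).ofLp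

instance (t : ℝ) : IsProbabilityMeasure (heatMeasure ι t) :=
  Measure.isProbabilityMeasure_map (by fun_prop)

theorem torusFourierStieltjes_heatMeasure {t : ℝ} (ht : 0 ≤ t) (m : ι → ℤ) :
    torusFourierStieltjes (heatMeasure ι t) m = (exp (-t * freqSq m) : ℝ) := by
  let v : EuclideanSpace ℝ ι := WithLp.toLp 2 fun i ↦ (m i : ℝ)
  have norm_sq_v : ‖v‖ ^ 2 = freqSq m := by simp [v, EuclideanSpace.norm_sq_eq, freqSq]
  have mFourier_eq : ∀ g : EuclideanSpace ℝ ι, mFourier m (angleToTorus (√(2 * t) • g).ofLp) =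
      Complex.exp (inner ℝ g (√(2 * t) • v) * Complex.I) := fun g ↦ by
    rw [mFourier_angleToTorus, mul_comm, inner_smul_right, PiLp.inner_apply, Finset.mul_sum]
    push_cast
    congr! 3 with i
    simp only [PiLp.smul_apply, smul_eq_mul, Complex.ofReal_mul, RCLike.inner_apply,
      ringHom_apply, Complex.ofReal_intCast, v]
    ring
  rw [torusFourierStieltjes, heatMeasure, integral_map (by fun_prop) (by fun_prop)]
  simp only [mFourier_eq]
  rw [← charFun_apply, charFun_stdGaussian, ← Complex.ofReal_pow, norm_smul, mul_pow, norm_sq_v,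
    norm_of_nonneg (sqrt_nonneg _), sq_sqrt (by positivity)]
  push_cast
  ring_nf

theorem integral_torusCost_zero_heatMeasure_le (t : ℝ) :
    ∫ y, torusCost (0, y) ∂heatMeasure ι t ≤ √(2 * Fintype.card ι * t) := by
  rw [heatMeasure, integral_map (by fun_prop) (by fun_prop)]
  calc ∫ g : EuclideanSpace ℝ ι, torusCost (0, angleToTorus (√(2 * t) • g).ofLp) ∂stdGaussian _
      ≤ ∫ g, √(2 * t) * ‖g‖ ∂stdGaussian (EuclideanSpace ℝ ι) := by
        refine integral_mono_of_nonneg (.of_forall fun g ↦ torusCost_nonneg _)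
          (IsGaussian.integrable_fun_id.norm.const_mul _) (.of_forall fun g ↦ ?_)
        exact (torusCost_zero_angleToTorus_le _).trans_eq
          (by rw [norm_smul, norm_of_nonneg (sqrt_nonneg _)])
    _ ≤ √(2 * t) * √(Fintype.card ι) := by
        rw [integral_const_mul]
        gcongr
        simpa using integral_norm_stdGaussian_le (EuclideanSpace ℝ ι)
    _ = √(2 * Fintype.card ι * t) := by
        rw [← sqrt_mul' _ (Nat.cast_nonneg _), mul_right_comm]

end HeatMeasure

theorem summable_pi_prod {α : Type*} {f : ι → α → ℝ} (hf : ∀ i k, 0 ≤ f i k)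
    (hsum : ∀ i, Summable (f i)) : Summable fun m : ι → α ↦ ∏ i, f i (m i) := by
  classical
  refine summable_of_sum_le (c := ∏ i, ∑' k, f i k) (fun m ↦ Finset.prod_nonneg fun i _ ↦ hf i _)
    fun A ↦ ?_
  calc ∑ m ∈ A, ∏ i, f i (m i)
      ≤ ∑ m ∈ Fintype.piFinset fun i ↦ A.image (· i), ∏ i, f i (m i) :=
        Finset.sum_le_sum_of_subset_of_nonneg
          (fun m hm ↦ Fintype.mem_piFinset.2 fun i ↦ Finset.mem_image_of_mem _ hm)
          fun m _ _ ↦ Finset.prod_nonneg fun i _ ↦ hf i _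
    _ = ∏ i, ∑ k ∈ A.image (· i), f i k := (Finset.prod_univ_sum _ _).symm
    _ ≤ ∏ i, ∑' k, f i k :=
        Finset.prod_le_prod (fun i _ ↦ Finset.sum_nonneg fun k _ ↦ hf i k)
          fun i _ ↦ (hsum i).sum_le_tsum _ fun k _ ↦ hf i k

theorem summable_exp_neg_mul_int_sq {t : ℝ} (ht : 0 < t) :
    Summable fun n : ℤ ↦ exp (-t * (n : ℝ) ^ 2) := by
  have hnat : Summable fun n : ℕ ↦ exp (-t * (n : ℝ) ^ 2) := by
    exact summable_exp_nat_mul_of_ge (neg_neg_of_pos ht) fun n ↦ by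
      exact_mod_cast Nat.le_self_pow two_ne_zero n
  exact .of_nat_of_neg (by simpa using hnat) (by simpa using hnat)

theorem summable_exp_neg_mul_freqSq {t : ℝ} (ht : 0 < t) :
    Summable fun m : ι → ℤ ↦ exp (-t * freqSq m) := by
  simpa only [freqSq, Finset.mul_sum, exp_sum] using
    summable_pi_prod (fun _ _ ↦ exp_nonneg _) fun _ : ι ↦ summable_exp_neg_mul_int_sq ht

theorem norm_mFourierCoeff_translateAverage_heatMeasure {t : ℝ} (ht : 0 ≤ t)
    (G : C(UnitAddTorus ι, ℂ)) (m : ι → ℤ) :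
    ‖mFourierCoeff (translateAverage (heatMeasure ι t) G) m‖ =
      ‖mFourierCoeff G m‖ * exp (-t * freqSq m) := by
  rw [mFourierCoeff_translateAverage, torusFourierStieltjes_heatMeasure ht, norm_mul,
    Complex.norm_real, norm_of_nonneg (exp_nonneg _)]

theorem summable_mFourierCoeff_translateAverage_heatMeasure {t : ℝ} (ht : 0 < t)
    (G : C(UnitAddTorus ι, ℂ)) :
    Summable (mFourierCoeff (translateAverage (heatMeasure ι t) G)) := by
  refine .of_norm_bounded ((summable_exp_neg_mul_freqSq ht).mul_left ‖G‖) fun m ↦ ?_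
  rw [norm_mFourierCoeff_translateAverage_heatMeasure ht.le]
  gcongr
  exact norm_mFourierCoeff_le G m

theorem freqSq_nonneg (m : ι → ℤ) : 0 ≤ freqSq m :=
  Finset.sum_nonneg fun _ _ ↦ sq_nonneg _

theorem freqSq_eq_zero {m : ι → ℤ} : freqSq m = 0 ↔ m = 0 := by
  simp [freqSq, Finset.sum_eq_zero_iff_of_nonneg, sq_nonneg, funext_iff]

/-- The `m`-th term of the series in the bound: the squared Fourier–Stieltjes coefficient of
`μ - ν` after heat flow for time `t`, divided by `|m|²`. It vanishes at `m = 0` because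
`1 / 0 = 0`. -/
def smoothedTerm (μ ν : Measure (UnitAddTorus ι)) (t : ℝ) (m : ι → ℤ) : ℝ :=
  1 / freqSq m * exp (-2 * freqSq m * t) *
    ‖torusFourierStieltjes μ m - torusFourierStieltjes ν m‖ ^ 2

theorem smoothedTerm_nonneg (μ ν : Measure (UnitAddTorus ι)) (t : ℝ) (m : ι → ℤ) :
    0 ≤ smoothedTerm μ ν t m := by
  have := freqSq_nonneg m
  unfold smoothedTerm
  positivity

theorem smoothedTerm_zero (μ ν : Measure (UnitAddTorus ι)) (t : ℝ) :
    smoothedTerm μ ν t 0 = 0 := by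
  simp [smoothedTerm, freqSq]

theorem sqrt_freqSq_mul_sqrt_smoothedTerm (μ ν : Measure (UnitAddTorus ι)) (t : ℝ) {m : ι → ℤ}
    (hm : m ≠ 0) : √(freqSq m) * √(smoothedTerm μ ν t m) =
      exp (-t * freqSq m) * ‖torusFourierStieltjes μ m - torusFourierStieltjes ν m‖ := by
  have hq : freqSq m ≠ 0 := freqSq_eq_zero.not.2 hm
  have product_eq : freqSq m * smoothedTerm μ ν t m =
      (exp (-t * freqSq m) * ‖torusFourierStieltjes μ m - torusFourierStieltjes ν m‖) ^ 2 := by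
    rw [smoothedTerm, mul_pow, ← exp_nat_mul]
    field_simp
    push_cast
    ring_nf
  rw [← sqrt_mul (freqSq_nonneg m), product_eq, sqrt_sq (by positivity)]

theorem sum_le_toReal_tsum_ofReal {α : Type*} {f : α → ℝ} {s : Set α} (hf : ∀ a, 0 ≤ f a)
    (hs : Function.support f ⊆ s) (htop : ∑' a : s, ENNReal.ofReal (f a) ≠ ∞) (A : Finset α) :
    ∑ a ∈ A, f a ≤ (∑' a : s, ENNReal.ofReal (f a)).toReal := by
  rw [← ENNReal.ofReal_le_iff_le_toReal htop, ENNReal.ofReal_sum_of_nonneg fun a _ ↦ hf a,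
    tsum_subtype_eq_of_support_subset (f := fun a ↦ ENNReal.ofReal (f a))
      ((Function.support_comp_subset ENNReal.ofReal_zero f).trans hs)]
  exact ENNReal.sum_le_tsum A

section SmoothedBound

variable (μ ν : Measure (UnitAddTorus ι)) [IsProbabilityMeasure μ] [IsProbabilityMeasure ν]

theorem norm_mFourierCoeff_heatMeasure_mul_sub {t : ℝ} (ht : 0 ≤ t) (G : C(UnitAddTorus ι, ℂ))
    (m : ι → ℤ) :
    ‖mFourierCoeff (translateAverage (heatMeasure ι t) G) m *
        (torusFourierStieltjes μ m - torusFourierStieltjes ν m)‖ =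
      (√(freqSq m) * ‖mFourierCoeff G m‖) * √(smoothedTerm μ ν t m) := by
  rcases eq_or_ne m 0 with rfl | hm
  · simp [torusFourierStieltjes_zero, smoothedTerm_zero]
  · rw [norm_mul, norm_mFourierCoeff_translateAverage_heatMeasure ht, mul_assoc,
      ← sqrt_freqSq_mul_sqrt_smoothedTerm μ ν t hm]
    ring

variable {t S : ℝ} {F : C(UnitAddTorus ι, ℝ)}

theorem CostLipschitz.norm_sum_mFourierCoeff_mul_sub_le (hF : CostLipschitz torusCost F)
    (ht : 0 ≤ t) (hS : ∀ A : Finset (ι → ℤ), ∑ m ∈ A, smoothedTerm μ ν t m ≤ S)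
    (A : Finset (ι → ℤ)) :
    ‖∑ m ∈ A, mFourierCoeff (translateAverage (heatMeasure ι t) (complexify F)) m *
      (torusFourierStieltjes μ m - torusFourierStieltjes ν m)‖ ≤ √S := by
  have energy : ∑ m ∈ A, (√(freqSq m) * ‖mFourierCoeff (complexify F) m‖) ^ 2 ≤ 1 := by
    simpa only [mul_pow, sq_sqrt (freqSq_nonneg _)] using
      hF.sum_freqSq_mul_sq_norm_mFourierCoeff_le_one A
  have weights : ∑ m ∈ A, √(smoothedTerm μ ν t m) ^ 2 ≤ S := by
    simpa only [sq_sqrt (smoothedTerm_nonneg μ ν t _)] using hS A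
  calc _ ≤ ∑ m ∈ A, (√(freqSq m) * ‖mFourierCoeff (complexify F) m‖) *
        √(smoothedTerm μ ν t m) := by
        simp only [← norm_mFourierCoeff_heatMeasure_mul_sub μ ν ht]
        exact norm_sum_le A _
    _ ≤ √(∑ m ∈ A, (√(freqSq m) * ‖mFourierCoeff (complexify F) m‖) ^ 2) *
        √(∑ m ∈ A, √(smoothedTerm μ ν t m) ^ 2) := sum_mul_le_sqrt_mul_sqrt A _ _
    _ ≤ √1 * √S := by gcongr
    _ = √S := by rw [sqrt_one, one_mul]

theorem CostLipschitz.norm_integral_translateAverage_sub_le (hF : CostLipschitz torusCost F)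
    (ht : 0 < t) (hS : ∀ A : Finset (ι → ℤ), ∑ m ∈ A, smoothedTerm μ ν t m ≤ S) :
    ‖∫ x, translateAverage (heatMeasure ι t) (complexify F) x ∂μ -
      ∫ x, translateAverage (heatMeasure ι t) (complexify F) x ∂ν‖ ≤ √S := by
  have hsummable := summable_mFourierCoeff_translateAverage_heatMeasure ht (complexify F)
  have hsum := (hasSum_mFourierCoeff_mul_torusFourierStieltjes μ hsummable).sub
    (hasSum_mFourierCoeff_mul_torusFourierStieltjes ν hsummable)
  simp only [← mul_sub] at hsum
  exact le_of_tendsto' hsum.norm (hF.norm_sum_mFourierCoeff_mul_sub_le μ ν ht.le hS)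

theorem CostLipschitz.integral_sub_integral_le (hF : CostLipschitz torusCost F) (ht : 0 < t)
    (hS : ∀ A : Finset (ι → ℤ), ∑ m ∈ A, smoothedTerm μ ν t m ≤ S) :
    ∫ x, F x ∂μ - ∫ x, F x ∂ν ≤ √S + 2 * √(2 * Fintype.card ι * t) := by
  let G := complexify F
  let H := translateAverage (heatMeasure ι t) G
  have smoothing_error : ∀ (θ : Measure (UnitAddTorus ι)) [IsProbabilityMeasure θ],
      dist (∫ x, G x ∂θ) (∫ x, H x ∂θ) ≤ √(2 * Fintype.card ι * t) := fun θ _ ↦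
    (dist_eq_norm _ _).trans_le ((hF.norm_integral_complexify_sub_integral_translateAverage_le
      _ θ).trans (integral_torusCost_zero_heatMeasure_le t))
  have smoothed : dist (∫ x, H x ∂μ) (∫ x, H x ∂ν) ≤ √S :=
    (dist_eq_norm _ _).trans_le (hF.norm_integral_translateAverage_sub_le μ ν ht hS)
  calc ∫ x, F x ∂μ - ∫ x, F x ∂ν
      ≤ dist (∫ x, G x ∂μ) (∫ x, G x ∂ν) := by
        simp only [G, complexify_apply, integral_complex_ofReal, dist_eq_norm,
          ← Complex.ofReal_sub, Complex.norm_real]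
        exact le_norm_self _
    _ ≤ dist (∫ x, G x ∂μ) (∫ x, H x ∂μ) + dist (∫ x, H x ∂μ) (∫ x, H x ∂ν) +
        dist (∫ x, H x ∂ν) (∫ x, G x ∂ν) := dist_triangle4 _ _ _ _
    _ ≤ √S + 2 * √(2 * Fintype.card ι * t) := by
        linarith [smoothing_error μ, smoothing_error ν,
          dist_comm (∫ x, H x ∂ν) (∫ x, G x ∂ν)]

end SmoothedBound

theorem transportCost_torusCost_le (μ ν : Measure (UnitAddTorus ι)) [IsProbabilityMeasure μ]
    [IsProbabilityMeasure ν] {t : ℝ} (ht : 0 < t) :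
    transportCost (fun x y ↦ torusCost (x, y)) μ ν ≤
      (∑' m : {m : ι → ℤ // m ≠ 0}, ENNReal.ofReal (smoothedTerm μ ν t m)) ^ (1 / 2 : ℝ) +
        ENNReal.ofReal (2 * √(2 * Fintype.card ι * t)) := by
  set S := ∑' m : {m : ι → ℤ // m ≠ 0}, ENNReal.ofReal (smoothedTerm μ ν t m)
  rcases eq_or_ne S ∞ with htop | htop
  · simp [htop]
  have support_subset : Function.support (smoothedTerm μ ν t) ⊆ {m | m ≠ 0} := fun m hm hm0 ↦
    hm (hm0 ▸ smoothedTerm_zero μ ν t)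
  have partial_sums := sum_le_toReal_tsum_ofReal (smoothedTerm_nonneg μ ν t) support_subset htop
  calc transportCost (fun x y ↦ torusCost (x, y)) μ ν
      ≤ ENNReal.ofReal (√S.toReal + 2 * √(2 * Fintype.card ι * t)) :=
        transportCost_le_of_costLipschitz μ ν torusCost_self torusCost_comm torusCost_triangle
          fun F hF ↦ hF.integral_sub_integral_le μ ν ht partial_sums
    _ = S ^ (1 / 2 : ℝ) + ENNReal.ofReal (2 * √(2 * Fintype.card ι * t)) := by
        rw [ENNReal.ofReal_add (sqrt_nonneg _) (by positivity), sqrt_eq_rpow,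
          ← ENNReal.ofReal_rpow_of_nonneg ENNReal.toReal_nonneg (by norm_num),
          ENNReal.ofReal_toReal htop]

end Fourier

/-- Proposition 2: a Fourier-analytic bound on `W̃₁(μ,ν)` after heat-kernel
smoothing, together with its version for `W₁` when `μ, ν` are supported on
`[0,π]^d`. -/
theorem W1tilde_le_fourier_smoothed {d : ℕ}
    (μ ν : Measure (Fin d → ℝ)) [IsProbabilityMeasure μ] [IsProbabilityMeasure ν]
    (hμ : μ (Qcube d)ᶜ = 0) (hν : ν (Qcube d)ᶜ = 0) {t : ℝ} (ht : 0 < t) :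
    W1tilde μ ν ≤
        (∑' m : {m : Fin d → ℤ // m ≠ 0},
            ENNReal.ofReal
              ((1 / ∑ i, ((m.1 i : ℝ)) ^ 2) * Real.exp (-2 * (∑ i, ((m.1 i : ℝ)) ^ 2) * t) *
                ‖fourierStieltjes μ m - fourierStieltjes ν m‖ ^ 2)) ^ (1/2 : ℝ)
          + ENNReal.ofReal (2 * Real.sqrt (2 * d * t)) ∧
      ((μ {x | ¬ ∀ i, x i ∈ Set.Icc (0 : ℝ) π} = 0) →
       (ν {x | ¬ ∀ i, x i ∈ Set.Icc (0 : ℝ) π} = 0) →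
        W1 μ ν ≤
          (∑' m : {m : Fin d → ℤ // m ≠ 0},
              ENNReal.ofReal
                ((1 / ∑ i, ((m.1 i : ℝ)) ^ 2) * Real.exp (-2 * (∑ i, ((m.1 i : ℝ)) ^ 2) * t) *
                  ‖fourierStieltjes μ m - fourierStieltjes ν m‖ ^ 2)) ^ (1/2 : ℝ)
            + ENNReal.ofReal (2 * Real.sqrt (2 * d * t))) := by
  have : IsProbabilityMeasure (μ.map angleToTorus) :=
    Measure.isProbabilityMeasure_map continuous_angleToTorus.aemeasurable
  have : IsProbabilityMeasure (ν.map angleToTorus) :=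
    Measure.isProbabilityMeasure_map continuous_angleToTorus.aemeasurable
  have torus_bound := (W1tilde_le_transportCost_torusCost hμ hν).trans
    (transportCost_torusCost_le (μ.map angleToTorus) (ν.map angleToTorus) ht)
  simp only [smoothedTerm, freqSq, ← fourierStieltjes_eq_torusFourierStieltjes,
    Fintype.card_fin] at torus_bound
  exact ⟨torus_bound, fun hμ' hν' ↦ (W1_le_W1tilde hμ' hν').trans torus_bound⟩
end
end

section
/- (Theorem 3.) There exists a constant C = C(d) > 0 depending only on d with the following property. Let X_1,…,X_n, Y_1,…,Y_n (n ≥ 2) be random variables with values in [0,1]^d such that the couples (X_1,Y_1),…,(X_n,Y_n) are pairwise independent and, for every k = 1,…,n, X_k and Y_k have the same distribution. Then for the empirical measures μ_n = (1/n)Σ_{k=1}^n δ_{X_k} and ν_n = (1/n)Σ_{k=1}^n δ_{Y_k}: E(W₁(μ_n,ν_n)) ≤ C/√n if d = 1; E(W₁(μ_n,ν_n)) ≤ C·√(log n / n) if d = 2; and E(W₁(μ_n,ν_n)) ≤ C/n^{1/d} if d ≥ 3. -/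
open MeasureTheory ProbabilityTheory Real ENNReal

noncomputable section

/-- The empirical measure `(1/n) Σ_k δ_{X_k(ω)}`. -/
def empMeasure {d n : ℕ} {Ω : Type*} [MeasurableSpace Ω]
    (X : Fin n → Ω → (Fin d → ℝ)) (ω : Ω) : Measure (Fin d → ℝ) :=
  (n : ℝ≥0∞)⁻¹ • ∑ k, Measure.dirac (X k ω)

/-!
By Kantorovich duality it suffices to bound `∑ k, (f (X k) - f (Y k)) / n` uniformly over
`1`-Lipschitz functions `f`. At the cost of `2√d / N` the points are moved to a grid of mesh `1 / N`
in the cube, and `f` is reflected to a function on the discrete torus of side `2N`. By Plancherel,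
the Lipschitz condition bounds `∑ m, |m|² |F m|²` for the Fourier coefficients `F` of `f`, so
Cauchy–Schwarz bounds the pairing of `f` with `∑ k, (δ (X k) - δ (Y k))` by the square root of
`∑ m, |m|⁻² |D m|²`, where `D m` is the Fourier coefficient of this signed measure. Since `D m` is a
sum of `n` pairwise independent, centred, bounded variables, `E |D m|² ≤ 4n`. Hence
`E W₁ ≲ 1 / N + √(n⁻¹ ∑ m, |m|⁻²)`, where the sum runs over the nonzero frequencies of size at most
`N`, and is bounded for `d = 1`, of order `log N` for `d = 2` and of order `N ^ (d - 2)` for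
`d ≥ 3`. The rates follow with `N = n` for `d ≤ 2` and `N ≈ n ^ (1 / d)` for `d ≥ 3`.
-/

section DiscreteTransport

/-- `f` is the `c`-transform of `ψ`. -/
lemma exists_lipschitz_potential {ι κ α : Type*} [Finite κ] [Nonempty κ] {c : α → α → ℝ}
    (hc_self : ∀ a, c a a = 0) (hc_tri : ∀ a b e, c a e ≤ c a b + c b e) {x : ι → α}
    {y : κ → α} {φ : ι → ℝ} {ψ : κ → ℝ}
    (hφψ : ∀ i j, φ i + ψ j ≤ c (x i) (y j)) :
    ∃ f : α → ℝ, (∀ a b, f a - f b ≤ c a b) ∧ (∀ i, φ i ≤ f (x i)) ∧ ∀ j, ψ j ≤ -f (y j) := by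
  have := Fintype.ofFinite κ
  let f (a : α) : ℝ := Finset.univ.inf' Finset.univ_nonempty fun j ↦ c a (y j) - ψ j
  have f_le (a j) : f a ≤ c a (y j) - ψ j := Finset.inf'_le _ (Finset.mem_univ j)
  refine ⟨f, fun a b ↦ ?_, fun i ↦ Finset.le_inf' _ _ fun j _ ↦ ?_, fun j ↦ ?_⟩
  · obtain ⟨j, -, hj : f b = _⟩ := Finset.exists_mem_eq_inf' Finset.univ_nonempty
      fun j ↦ c b (y j) - ψ j
    linarith [f_le a j, hc_tri a b (y j)]
  · linarith [hφψ i j]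
  · linarith [f_le (y j) j, hc_self (y j)]

variable {ι κ : Type*} [Fintype ι] [Fintype κ]

/-- A transport plan between the weights `p` and `q`: a nonnegative matrix with row sums `p` and
column sums `q`. It is the discrete counterpart of `IsCoupling`. -/
structure IsTransportPlan (p : ι → ℝ) (q : κ → ℝ) (w : ι × κ → ℝ) : Prop where
  nonneg : ∀ e, 0 ≤ w e
  sum_row : ∀ i, ∑ j, w (i, j) = p i
  sum_col : ∀ j, ∑ i, w (i, j) = q j

lemma isTransportPlan_mul {p : ι → ℝ} {q : κ → ℝ} (hp : p ∈ stdSimplex ℝ ι)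
    (hq : q ∈ stdSimplex ℝ κ) : IsTransportPlan p q fun e ↦ p e.1 * q e.2 where
  nonneg e := mul_nonneg (hp.1 e.1) (hq.1 e.2)
  sum_row i := by simp only [← Finset.mul_sum, hq.2, mul_one]
  sum_col j := by simp only [← Finset.sum_mul, hp.2, one_mul]

lemma IsTransportPlan.mem_stdSimplex {p : ι → ℝ} {q : κ → ℝ} {w : ι × κ → ℝ}
    (hw : IsTransportPlan p q w) (hp : ∑ i, p i = 1) : w ∈ stdSimplex ℝ (ι × κ) :=
  ⟨hw.nonneg, by simp only [Fintype.sum_prod_type, hw.sum_row, hp]⟩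

/-- The linear map sending a matrix `w` to its row sums, its column sums and its cost `∑ w c`. -/
def marginalsAndCost (c : ι → κ → ℝ) : (ι × κ → ℝ) →ₗ[ℝ] (ι → ℝ) × (κ → ℝ) × ℝ :=
  .prod (.pi fun i ↦ ∑ j, .proj (i, j))
    (.prod (.pi fun j ↦ ∑ i, .proj (i, j)) (∑ e, c e.1 e.2 • .proj e))

lemma marginalsAndCost_apply (c : ι → κ → ℝ) (w : ι × κ → ℝ) :
    marginalsAndCost c w =
      (fun i ↦ ∑ j, w (i, j), fun j ↦ ∑ i, w (i, j), ∑ e, c e.1 e.2 * w e) := by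
  ext <;> simp [marginalsAndCost]

lemma IsTransportPlan.marginalsAndCost_eq {p : ι → ℝ} {q : κ → ℝ} {w : ι × κ → ℝ}
    (hw : IsTransportPlan p q w) (c : ι → κ → ℝ) :
    marginalsAndCost c w = (p, q, ∑ e, c e.1 e.2 * w e) := by
  simp only [marginalsAndCost_apply, hw.sum_row, hw.sum_col]

lemma marginalsAndCost_single [DecidableEq ι] [DecidableEq κ] (c : ι → κ → ℝ) (i : ι) (j : κ) :
    marginalsAndCost c (Pi.single (i, j) 1) = (Pi.single i 1, Pi.single j 1, c i j) := by
  rw [marginalsAndCost_apply]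
  ext k
  · simp [Pi.single_apply, ite_and]
  · simp [Pi.single_apply, ite_and]
  · simp only [Pi.single_apply, mul_ite, mul_one, mul_zero, Finset.sum_ite_eq', Finset.mem_univ,
      if_true]

lemma exists_coefficients_of_linearMap (F : (ι → ℝ) × (κ → ℝ) × ℝ →ₗ[ℝ] ℝ) :
    ∃ (a : ι → ℝ) (b : κ → ℝ) (s : ℝ),
      ∀ x y t, F (x, y, t) = ∑ i, x i * a i + ∑ j, y j * b j + t * s := by
  classical
  refine ⟨fun i ↦ F (fun k ↦ if i = k then 1 else 0, 0, 0),
    fun j ↦ F (0, fun k ↦ if j = k then 1 else 0, 0), F (0, 0, 1), fun x y t ↦ ?_⟩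
  have hx := (F ∘ₗ .inl ℝ (ι → ℝ) ((κ → ℝ) × ℝ)).pi_apply_eq_sum_univ x
  have hy := (F ∘ₗ .inr ℝ (ι → ℝ) ((κ → ℝ) × ℝ) ∘ₗ .inl ℝ (κ → ℝ) ℝ).pi_apply_eq_sum_univ y
  have ht : F (0, 0, t) = t * F (0, 0, 1) := by
    rw [← smul_eq_mul, ← map_smul, Prod.smul_mk, Prod.smul_mk, smul_zero, smul_zero, smul_eq_mul,
      mul_one]
  calc F (x, y, t) = F (x, 0, 0) + F (0, y, 0) + F (0, 0, t) := by simp [← map_add]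
    _ = _ := congrArg₂ _ (congrArg₂ _ hx hy) ht

/-- Finite Kantorovich duality. The plans form a polytope; if all of them cost more than `B`, then
`(p, q, B)` is separated from the image of the simplex by a hyperplane, whose coefficients are dual
potentials. That the cost coefficient of this hyperplane is negative is seen on the product plan. -/
theorem exists_transportPlan_cost_le (c : ι → κ → ℝ) {p : ι → ℝ} {q : κ → ℝ}
    (hp : p ∈ stdSimplex ℝ ι) (hq : q ∈ stdSimplex ℝ κ) {B : ℝ}
    (dual_le : ∀ (φ : ι → ℝ) (ψ : κ → ℝ), (∀ i j, φ i + ψ j ≤ c i j) →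
      ∑ i, p i * φ i + ∑ j, q j * ψ j ≤ B) :
    ∃ w, IsTransportPlan p q w ∧ ∑ e, c e.1 e.2 * w e ≤ B := by
  classical
  by_contra! costly
  have point_notMem : (p, q, B) ∉ marginalsAndCost c '' stdSimplex ℝ (ι × κ) := by
    rintro ⟨w, hw, hwB⟩
    simp only [marginalsAndCost_apply, Prod.mk.injEq, funext_iff] at hwB
    exact (costly w ⟨hw.1, hwB.1, hwB.2.1⟩).ne' hwB.2.2
  obtain ⟨F, u, hF_image, hF_point⟩ := geometric_hahn_banach_closed_point
    ((convex_stdSimplex ℝ _).linear_image (marginalsAndCost c))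
    ((isCompact_stdSimplex ℝ _).image
      (marginalsAndCost c).continuous_of_finiteDimensional).isClosed point_notMem
  obtain ⟨a, b, s, hF⟩ := exists_coefficients_of_linearMap F.toLinearMap
  simp only [ContinuousLinearMap.coe_coe] at hF
  rw [hF] at hF_point
  have hs : s < 0 := by
    have plan := isTransportPlan_mul hp hq
    have hlt := hF_image _ ⟨_, plan.mem_stdSimplex hp.2, plan.marginalsAndCost_eq c⟩
    rw [hF] at hlt
    nlinarith [costly _ plan]
  have vertex_lt (i j) : a i + b j + c i j * s < u := by
    have hlt := hF_image _ ⟨_, single_mem_stdSimplex ℝ (i, j), marginalsAndCost_single c i j⟩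
    simpa [hF, Pi.single_apply] using hlt
  have feasible (i j) : (u - a i) / s + -b j / s ≤ c i j := by
    rw [← add_div, div_le_iff_of_neg hs]
    linarith [vertex_lt i j]
  have value : ∑ i, p i * ((u - a i) / s) + ∑ j, q j * (-b j / s)
      = (u - ∑ i, p i * a i - ∑ j, q j * b j) / s := by
    simp only [mul_div_assoc', ← Finset.sum_div, mul_sub, mul_neg, Finset.sum_sub_distrib,
      Finset.sum_neg_distrib, ← Finset.sum_mul, hp.2]
    ring
  have := dual_le _ _ feasible
  rw [value, div_le_iff_of_neg hs] at this
  linarith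

variable {α : Type*} [MeasurableSpace α]

/-- The measure with mass `p i` at the point `x i`. Negative weights are read as `0`. -/
def discreteMeasure (p : ι → ℝ) (x : ι → α) : Measure α :=
  ∑ i, ENNReal.ofReal (p i) • Measure.dirac (x i)

lemma map_discreteMeasure {β : Type*} [MeasurableSpace β] {f : α → β} (hf : Measurable f)
    (p : ι → ℝ) (x : ι → α) :
    (discreteMeasure p x).map f = discreteMeasure p fun i ↦ f (x i) := by
  simp only [discreteMeasure, ← Measure.mapₗ_apply_of_measurable hf, map_sum, map_smul]
  simp only [Measure.mapₗ_apply_of_measurable hf, Measure.map_dirac' hf]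

lemma lintegral_discreteMeasure [MeasurableSingletonClass α] (p : ι → ℝ) (x : ι → α)
    (f : α → ℝ≥0∞) :
    ∫⁻ a, f a ∂discreteMeasure p x = ∑ i, ENNReal.ofReal (p i) * f (x i) := by
  simp only [discreteMeasure, lintegral_finsetSum_measure, lintegral_smul_measure, lintegral_dirac,
    smul_eq_mul]

lemma IsTransportPlan.isCoupling {p : ι → ℝ} {q : κ → ℝ} {w : ι × κ → ℝ}
    (hw : IsTransportPlan p q w) (x : ι → α) (y : κ → α) :
    IsCoupling (discreteMeasure w fun e ↦ (x e.1, y e.2)) (discreteMeasure p x)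
      (discreteMeasure q y) := by
  constructor
  · rw [map_discreteMeasure measurable_fst]
    simp only [discreteMeasure, Fintype.sum_prod_type, ← Finset.sum_smul, ← hw.sum_row,
      ENNReal.ofReal_sum_of_nonneg fun _ _ ↦ hw.nonneg _]
  · rw [map_discreteMeasure measurable_snd]
    simp only [discreteMeasure, Fintype.sum_prod_type_right, ← Finset.sum_smul, ← hw.sum_col,
      ENNReal.ofReal_sum_of_nonneg fun _ _ ↦ hw.nonneg _]

lemma IsTransportPlan.transportCost_le [MeasurableSingletonClass α] {c : α → α → ℝ}
    (hc : ∀ a b, 0 ≤ c a b) {p : ι → ℝ} {q : κ → ℝ} {w : ι × κ → ℝ}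
    (hw : IsTransportPlan p q w) (x : ι → α) (y : κ → α) :
    transportCost c (discreteMeasure p x) (discreteMeasure q y)
      ≤ ENNReal.ofReal (∑ e, c (x e.1) (y e.2) * w e) := by
  refine le_trans (iInf₂_le (discreteMeasure w fun e ↦ (x e.1, y e.2)) (hw.isCoupling x y))
    (le_of_eq ?_)
  rw [lintegral_discreteMeasure,
    ENNReal.ofReal_sum_of_nonneg fun e _ ↦ mul_nonneg (hc _ _) (hw.nonneg e)]
  exact Finset.sum_congr rfl fun e _ ↦ by rw [ENNReal.ofReal_mul (hc _ _), mul_comm]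

theorem transportCost_discreteMeasure_le [MeasurableSingletonClass α] {c : α → α → ℝ}
    (hc_nonneg : ∀ a b, 0 ≤ c a b) (hc_self : ∀ a, c a a = 0)
    (hc_tri : ∀ a b e, c a e ≤ c a b + c b e) {p : ι → ℝ} {q : κ → ℝ}
    (hp : p ∈ stdSimplex ℝ ι) (hq : q ∈ stdSimplex ℝ κ) (x : ι → α) (y : κ → α) {B : ℝ}
    (lipschitz_le : ∀ f : α → ℝ, (∀ a b, f a - f b ≤ c a b) →
      ∑ i, p i * f (x i) - ∑ j, q j * f (y j) ≤ B) :
    transportCost c (discreteMeasure p x) (discreteMeasure q y) ≤ ENNReal.ofReal B := by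
  have : Nonempty κ := by
    by_contra hκ
    have := hq.2
    simp_all
  obtain ⟨w, hw, hwB⟩ : ∃ w, IsTransportPlan p q w ∧ ∑ e, c (x e.1) (y e.2) * w e ≤ B := by
    refine exists_transportPlan_cost_le (fun i j ↦ c (x i) (y j)) hp hq fun φ ψ hφψ ↦ ?_
    obtain ⟨f, hf, hφ, hψ⟩ := exists_lipschitz_potential hc_self hc_tri hφψ
    calc ∑ i, p i * φ i + ∑ j, q j * ψ j ≤ ∑ i, p i * f (x i) + ∑ j, q j * -f (y j) := by
          gcongr with i _ j _
          exacts [hp.1 i, hφ i, hq.1 j, hψ j]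
      _ ≤ B := by simpa only [mul_neg, Finset.sum_neg_distrib, ← sub_eq_add_neg] using
          lipschitz_le f hf
  exact (hw.transportCost_le hc_nonneg x y).trans (ENNReal.ofReal_le_ofReal hwB)

end DiscreteTransport

section EmpiricalTransport

variable {d n : ℕ}

lemma euclidDist_eq_dist (x y : Fin d → ℝ) :
    euclidDist x y = dist (WithLp.toLp 2 x) (WithLp.toLp 2 y) := by
  simp [euclidDist, EuclideanSpace.dist_eq, Real.dist_eq, sq_abs]

lemma euclidDist_nonneg (x y : Fin d → ℝ) : 0 ≤ euclidDist x y := Real.sqrt_nonneg _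

lemma euclidDist_self (x : Fin d → ℝ) : euclidDist x x = 0 := by
  rw [euclidDist_eq_dist, dist_self]

lemma euclidDist_comm (x y : Fin d → ℝ) : euclidDist x y = euclidDist y x := by
  simp only [euclidDist_eq_dist, dist_comm]

lemma euclidDist_triangle (x y z : Fin d → ℝ) :
    euclidDist x z ≤ euclidDist x y + euclidDist y z := by
  simpa only [euclidDist_eq_dist] using dist_triangle _ _ _

lemma empMeasure_eq_discreteMeasure {Ω : Type*} [MeasurableSpace Ω] [NeZero n]
    (X : Fin n → Ω → Fin d → ℝ) (ω : Ω) :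
    empMeasure X ω = discreteMeasure (fun _ ↦ (n : ℝ)⁻¹) fun k ↦ X k ω := by
  have hn : (0 : ℝ) < n := Nat.cast_pos.2 (NeZero.pos n)
  rw [empMeasure, discreteMeasure, Finset.smul_sum, ENNReal.ofReal_inv_of_pos hn,
    ENNReal.ofReal_natCast]

theorem W1_empMeasure_le {Ω : Type*} [MeasurableSpace Ω] [NeZero n] {X Y : Fin n → Ω → Fin d → ℝ}
    {ω : Ω} {B : ℝ}
    (lipschitz_le : ∀ f : (Fin d → ℝ) → ℝ, (∀ u v, f u - f v ≤ euclidDist u v) →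
      (∑ k, (f (X k ω) - f (Y k ω))) / n ≤ B) :
    W1 (empMeasure X ω) (empMeasure Y ω) ≤ ENNReal.ofReal B := by
  have uniform_mem : (fun _ ↦ (n : ℝ)⁻¹) ∈ stdSimplex ℝ (Fin n) :=
    ⟨fun _ ↦ by positivity, by simp [NeZero.ne n]⟩
  rw [empMeasure_eq_discreteMeasure, empMeasure_eq_discreteMeasure]
  refine transportCost_discreteMeasure_le euclidDist_nonneg euclidDist_self euclidDist_triangle
    uniform_mem uniform_mem _ _ fun f hf ↦ ?_
  rw [← Finset.mul_sum, ← Finset.mul_sum, ← mul_sub, ← Finset.sum_sub_distrib, inv_mul_eq_div]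
  exact lipschitz_le f hf

end EmpiricalTransport

section GridFourier

open scoped ComplexConjugate

variable {ι κ : Type*} [Fintype ι] [Fintype κ] {M : ℕ}

/-- The squared Euclidean length of a frequency, each coordinate being represented in
`(-M/2, M/2]`. -/
def sqFreq (m : ι → ZMod M) : ℝ := ∑ i, ((m i).valMinAbs : ℝ) ^ 2

lemma sqFreq_nonneg (m : ι → ZMod M) : 0 ≤ sqFreq m := Finset.sum_nonneg fun _ _ ↦ sq_nonneg _

lemma sqFreq_pos {m : ι → ZMod M} (hm : m ≠ 0) : 0 < sqFreq m := by
  obtain ⟨i, hi⟩ := Function.ne_iff.1 hm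
  have : (m i).valMinAbs ≠ 0 := by rwa [Ne, ZMod.valMinAbs_eq_zero]
  exact Finset.sum_pos' (fun _ _ ↦ sq_nonneg _) ⟨i, Finset.mem_univ i, by positivity⟩

variable [NeZero M]

lemma two_div_pi_mul_abs_le_norm_exp_sub_one {θ : ℝ} (hθ : |θ| ≤ π) :
    2 / π * |θ| ≤ ‖Complex.exp (Complex.I * θ) - 1‖ := by
  have half_le : |θ / 2| ≤ π / 2 := by rw [abs_div, abs_two]; linarith
  have sin_bound := Real.mul_abs_le_abs_sin half_le
  rw [abs_div, abs_two] at sin_bound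
  rw [Complex.norm_exp_I_mul_ofReal_sub_one, norm_mul, Real.norm_two, Real.norm_eq_abs]
  linarith

lemma abs_valMinAbs_mul_two_le (a : ZMod M) : |(a.valMinAbs : ℝ)| * 2 ≤ M := by
  have := ZMod.natAbs_valMinAbs_le a
  rw [← Int.cast_abs, Int.abs_eq_natAbs]
  exact_mod_cast (by lia : a.valMinAbs.natAbs * 2 ≤ M)

lemma four_mul_abs_valMinAbs_div_le (a : ZMod M) :
    4 * |(a.valMinAbs : ℝ)| / M ≤ ‖(ZMod.stdAddChar a : ℂ) - 1‖ := by
  have hM : (0 : ℝ) < M := Nat.cast_pos.2 (NeZero.pos M)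
  set θ : ℝ := 2 * π * a.valMinAbs / M with hθ
  have abs_θ : |θ| = 2 * π * |(a.valMinAbs : ℝ)| / M := by
    rw [hθ, abs_div, abs_mul, abs_of_pos Real.two_pi_pos, Nat.abs_cast]
  have θ_le : |θ| ≤ π := by
    rw [abs_θ, div_le_iff₀ hM]
    nlinarith [Real.pi_pos, abs_valMinAbs_mul_two_le a]
  have char_eq : (ZMod.stdAddChar a : ℂ) = Complex.exp (Complex.I * θ) := by
    conv_lhs => rw [← ZMod.coe_valMinAbs a, ZMod.stdAddChar_coe]
    rw [hθ]
    push_cast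
    ring_nf
  calc 4 * |(a.valMinAbs : ℝ)| / M = 2 / π * |θ| := by rw [abs_θ]; field_simp; ring
    _ ≤ _ := char_eq ▸ two_div_pi_mul_abs_le_norm_exp_sub_one θ_le

/-- The character of the discrete torus `ι → ZMod M` with frequency `m`. -/
def gridChar (m : ι → ZMod M) : AddChar (ι → ZMod M) ℂ where
  toFun g := ZMod.stdAddChar (m ⬝ᵥ g)
  map_zero_eq_one' := by simp
  map_add_eq_mul' g h := by rw [dotProduct_add, AddChar.map_add_eq_mul]

lemma gridChar_apply (m g : ι → ZMod M) : gridChar m g = ZMod.stdAddChar (m ⬝ᵥ g) := rfl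

lemma gridChar_comm (m g : ι → ZMod M) : gridChar m g = gridChar g m := by
  rw [gridChar_apply, gridChar_apply, dotProduct_comm]

lemma gridChar_single [DecidableEq ι] (m : ι → ZMod M) (i : ι) :
    gridChar m (Pi.single i 1) = ZMod.stdAddChar (m i) := by
  rw [gridChar_apply, dotProduct_single_one]

lemma gridChar_eq_zero_iff {m : ι → ZMod M} : gridChar m = 0 ↔ m = 0 := by
  classical
  refine ⟨fun h ↦ funext fun i ↦ ?_, fun h ↦ ?_⟩
  · have := DFunLike.congr_fun h (Pi.single i 1)
    rwa [gridChar_single, AddChar.zero_apply, ← AddChar.map_zero_eq_one (ZMod.stdAddChar (N := M)),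
      ZMod.injective_stdAddChar.eq_iff] at this
  · ext g
    rw [h, gridChar_apply, zero_dotProduct, AddChar.map_zero_eq_one, AddChar.zero_apply]

/-- The difference at frequency `m` between the Fourier coefficients of `∑ k, δ (p k)` and
`∑ k, δ (q k)`. -/
def charDiscrepancy (p q : κ → ι → ZMod M) (m : ι → ZMod M) : ℂ :=
  ∑ k, (gridChar m (p k) - gridChar m (q k))

lemma charDiscrepancy_zero (p q : κ → ι → ZMod M) : charDiscrepancy p q 0 = 0 := by
  simp only [charDiscrepancy, gridChar_apply, zero_dotProduct, sub_self, Finset.sum_const_zero]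

variable [DecidableEq ι]

lemma sum_gridChar (g : ι → ZMod M) :
    ∑ m, gridChar m g = if g = 0 then (M : ℂ) ^ Fintype.card ι else 0 := by
  classical
  simp only [gridChar_comm _ g, AddChar.sum_eq_ite, gridChar_eq_zero_iff, Fintype.card_pi,
    ZMod.card, Finset.prod_const, Finset.card_univ, Nat.cast_pow]

/-- The unnormalised discrete Fourier transform on the torus `ι → ZMod M`. -/
def gridFourier (F : (ι → ZMod M) → ℂ) (m : ι → ZMod M) : ℂ := ∑ g, F g * gridChar m g

lemma sum_gridFourier_mul_conj (F : (ι → ZMod M) → ℂ) (p : ι → ZMod M) :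
    ∑ m, gridFourier F m * conj (gridChar m p) = (M : ℂ) ^ Fintype.card ι * F p := by
  simp only [gridFourier, Finset.sum_mul]
  rw [Finset.sum_comm]
  simp only [← AddChar.map_neg_eq_conj, mul_assoc, ← AddChar.map_add_eq_mul, ← Finset.mul_sum,
    sum_gridChar, ← sub_eq_add_neg, sub_eq_zero, mul_ite, mul_zero, Finset.sum_ite_eq',
    Finset.mem_univ, if_true]
  exact mul_comm _ _

theorem sum_norm_gridFourier_sq (F : (ι → ZMod M) → ℂ) :
    ∑ m, ‖gridFourier F m‖ ^ 2 = (M : ℝ) ^ Fintype.card ι * ∑ g, ‖F g‖ ^ 2 := by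
  have norm_sq_eq (m) : ((‖gridFourier F m‖ ^ 2 : ℝ) : ℂ)
      = ∑ g, conj (F g) * (gridFourier F m * conj (gridChar m g)) := by
    push_cast
    rw [← Complex.mul_conj']
    nth_rw 2 [gridFourier]
    simp only [map_sum, map_mul, Finset.mul_sum, mul_left_comm]
  have : ((∑ m, ‖gridFourier F m‖ ^ 2 : ℝ) : ℂ)
      = ((M : ℝ) ^ Fintype.card ι * ∑ g, ‖F g‖ ^ 2 : ℝ) := by
    rw [Complex.ofReal_sum]
    simp only [norm_sq_eq]
    rw [Finset.sum_comm]
    simp only [← Finset.mul_sum, sum_gridFourier_mul_conj]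
    push_cast
    simp only [mul_left_comm, Complex.conj_mul', Finset.mul_sum]
  exact_mod_cast this

lemma gridFourier_backward_diff (F : (ι → ZMod M) → ℂ) (i : ι) (m : ι → ZMod M) :
    gridFourier (fun g ↦ F (g - Pi.single i 1) - F g) m
      = (ZMod.stdAddChar (m i) - 1) * gridFourier F m := by
  simp only [gridFourier, sub_mul, Finset.sum_sub_distrib, one_mul]
  congr 1
  rw [← Equiv.sum_comp (Equiv.addRight (Pi.single i (1 : ZMod M))), Finset.mul_sum]
  refine Finset.sum_congr rfl fun g _ ↦ ?_
  rw [Equiv.coe_addRight, add_sub_cancel_right, AddChar.map_add_eq_mul, gridChar_single]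
  ring

theorem sum_sqFreq_mul_norm_gridFourier_sq_le (F : (ι → ZMod M) → ℂ) :
    16 / (M : ℝ) ^ 2 * ∑ m, sqFreq m * ‖gridFourier F m‖ ^ 2
      ≤ (M : ℝ) ^ Fintype.card ι * ∑ i, ∑ g, ‖F (g - Pi.single i 1) - F g‖ ^ 2 :=
  calc 16 / (M : ℝ) ^ 2 * ∑ m, sqFreq m * ‖gridFourier F m‖ ^ 2
      = ∑ m, ∑ i, (4 * |((m i).valMinAbs : ℝ)| / M) ^ 2 * ‖gridFourier F m‖ ^ 2 := by
        simp only [sqFreq, Finset.mul_sum, Finset.sum_mul, div_pow, mul_pow, sq_abs]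
        ring_nf
    _ ≤ ∑ m, ∑ i, ‖gridFourier (fun g ↦ F (g - Pi.single i 1) - F g) m‖ ^ 2 := by
        simp only [gridFourier_backward_diff, norm_mul, mul_pow]
        gcongr
        exact four_mul_abs_valMinAbs_div_le _
    _ = _ := by
        rw [Finset.sum_comm]
        simp only [sum_norm_gridFourier_sq, Finset.mul_sum]

/-- The squared negative-order Sobolev norm of `∑ k, (δ (p k) - δ (q k))`. The frequency `0`
contributes `0 / 0 = 0`. -/
def discrepancyEnergy (p q : κ → ι → ZMod M) : ℝ := ∑ m, ‖charDiscrepancy p q m‖ ^ 2 / sqFreq m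

lemma discrepancyEnergy_nonneg (p q : κ → ι → ZMod M) : 0 ≤ discrepancyEnergy p q :=
  Finset.sum_nonneg fun m _ ↦ div_nonneg (sq_nonneg _) (sqFreq_nonneg m)

lemma sum_gridFourier_mul_conj_charDiscrepancy (F : (ι → ZMod M) → ℂ) (p q : κ → ι → ZMod M) :
    ∑ m, gridFourier F m * conj (charDiscrepancy p q m)
      = (M : ℂ) ^ Fintype.card ι * ∑ k, (F (p k) - F (q k)) := by
  simp only [charDiscrepancy, map_sum, map_sub, Finset.mul_sum, mul_sub]
  rw [Finset.sum_comm]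
  simp only [Finset.sum_sub_distrib, sum_gridFourier_mul_conj]

lemma sq_sum_gridFourier_mul_charDiscrepancy_le (F : (ι → ZMod M) → ℂ) (p q : κ → ι → ZMod M) :
    (∑ m, ‖gridFourier F m‖ * ‖charDiscrepancy p q m‖) ^ 2
      ≤ (∑ m, sqFreq m * ‖gridFourier F m‖ ^ 2) * discrepancyEnergy p q := by
  refine Finset.sum_sq_le_sum_mul_sum_of_sq_le_mul _
    (fun m _ ↦ mul_nonneg (sqFreq_nonneg m) (sq_nonneg _))
    (fun m _ ↦ div_nonneg (sq_nonneg _) (sqFreq_nonneg m)) fun m _ ↦ ?_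
  rcases eq_or_ne m 0 with rfl | hm
  · simp [charDiscrepancy_zero]
  · have := sqFreq_pos hm
    exact le_of_eq (by field_simp)

theorem norm_sum_sub_sq_le_mul_discrepancyEnergy {F : (ι → ZMod M) → ℂ} {δ : ℝ}
    (hF : ∀ g i, ‖F (g - Pi.single i 1) - F g‖ ≤ δ) (p q : κ → ι → ZMod M) :
    ‖∑ k, (F (p k) - F (q k))‖ ^ 2
      ≤ Fintype.card ι * (M * δ) ^ 2 / 16 * discrepancyEnergy p q := by
  have hM : (0 : ℝ) < M := Nat.cast_pos.2 (NeZero.pos M)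
  set V : ℝ := (M : ℝ) ^ Fintype.card ι
  have smoothness : ∑ m, sqFreq m * ‖gridFourier F m‖ ^ 2
      ≤ V ^ 2 * (Fintype.card ι * (M * δ) ^ 2 / 16) := by
    have gradient_le : ∑ i, ∑ g, ‖F (g - Pi.single i 1) - F g‖ ^ 2 ≤ Fintype.card ι * V * δ ^ 2 :=
      calc _ ≤ ∑ _ : ι, ∑ _ : ι → ZMod M, δ ^ 2 := by gcongr; exact hF _ _
        _ = _ := by simp [V, ZMod.card, mul_assoc]
    have := (sum_sqFreq_mul_norm_gridFourier_sq_le F).trans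
      (mul_le_mul_of_nonneg_left gradient_le (by positivity))
    rw [div_mul_eq_mul_div, div_le_iff₀ (by positivity)] at this
    linarith
  have pairing : V * ‖∑ k, (F (p k) - F (q k))‖
      ≤ ∑ m, ‖gridFourier F m‖ * ‖charDiscrepancy p q m‖ :=
    calc _ = ‖∑ m, gridFourier F m * conj (charDiscrepancy p q m)‖ := by
          simp [sum_gridFourier_mul_conj_charDiscrepancy, V]
      _ ≤ _ := (norm_sum_le _ _).trans_eq (by simp)
  refine le_of_mul_le_mul_left ?_ (by positivity : 0 < V ^ 2)
  calc V ^ 2 * ‖∑ k, (F (p k) - F (q k))‖ ^ 2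
      = (V * ‖∑ k, (F (p k) - F (q k))‖) ^ 2 := (mul_pow _ _ _).symm
    _ ≤ (∑ m, sqFreq m * ‖gridFourier F m‖ ^ 2) * discrepancyEnergy p q := by
        grw [pairing, sq_sum_gridFourier_mul_charDiscrepancy_le]
    _ ≤ V ^ 2 * (Fintype.card ι * (M * δ) ^ 2 / 16) * discrepancyEnergy p q := by
        gcongr
        exact discrepancyEnergy_nonneg p q
    _ = _ := mul_assoc _ _ _

end GridFourier

section Discretization

/-- The cell containing `x` of the grid with mesh `1 / N`, as a point of the discrete torus of
side `2 * N`. The unit cube occupies only the residues `0, …, N` in each coordinate. -/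
def gridFloor {ι : Type*} (N : ℕ) (x : ι → ℝ) : ι → ZMod (2 * N) := fun i ↦ (⌊N * x i⌋₊ : ℕ)

/-- The reflection of the discrete torus of side `2 * N` onto the unit cube. Composing with it turns
a Lipschitz function on the cube into a Lipschitz function on the torus. -/
def gridFold {ι : Type*} (N : ℕ) (g : ι → ZMod (2 * N)) : ι → ℝ :=
  fun i ↦ ((g i).valMinAbs.natAbs : ℝ) / N

lemma measurable_gridFloor {ι : Type*} (N : ℕ) : Measurable (gridFloor (ι := ι) N) :=
  measurable_pi_lambda _ fun i ↦ (Measurable.of_discrete (f := Nat.cast)).comp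
    (Nat.measurable_floor.comp ((measurable_pi_apply i).const_mul _))

lemma gridFold_gridFloor_apply {ι : Type*} {N : ℕ} {x : ι → ℝ} {i : ι} (hx : x i ≤ 1) :
    gridFold N (gridFloor N x) i = (⌊N * x i⌋₊ : ℝ) / N := by
  have floor_le : ⌊N * x i⌋₊ ≤ 2 * N / 2 := by
    rw [Nat.mul_div_cancel_left _ two_pos]
    exact Nat.floor_le_of_le (mul_le_of_le_one_right N.cast_nonneg hx)
  rw [gridFold, gridFloor, ZMod.valMinAbs_natCast_of_le_half floor_le, Int.natAbs_natCast]

lemma natAbs_valMinAbs_one_le (M : ℕ) [NeZero M] : (1 : ZMod M).valMinAbs.natAbs ≤ 1 := by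
  rw [ZMod.valMinAbs_natAbs_eq_min, ZMod.val_one_eq_one_mod]
  exact (min_le_left _ _).trans (Nat.mod_le _ _)

lemma abs_natAbs_valMinAbs_sub_one_sub_le {M : ℕ} [NeZero M] (a : ZMod M) :
    |((a - 1).valMinAbs.natAbs : ℝ) - a.valMinAbs.natAbs| ≤ 1 := by
  have hone := natAbs_valMinAbs_one_le M
  have hup : a.valMinAbs.natAbs ≤ (a - 1).valMinAbs.natAbs + 1 := by
    have := ZMod.natAbs_valMinAbs_add_le (a - 1) 1
    rw [sub_add_cancel] at this
    lia
  have hdown : (a - 1).valMinAbs.natAbs ≤ a.valMinAbs.natAbs + 1 := by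
    have := ZMod.natAbs_valMinAbs_add_le a (-1)
    rw [← sub_eq_add_neg] at this
    have := ZMod.natAbs_valMinAbs_neg (1 : ZMod M)
    lia
  rw [abs_sub_le_iff, sub_le_iff_le_add', sub_le_iff_le_add']
  exact_mod_cast And.intro (by lia) (by lia)

variable {d : ℕ}

lemma euclidDist_le_sqrt_mul {x y : Fin d → ℝ} {r : ℝ} (hr : 0 ≤ r) (h : ∀ i, |x i - y i| ≤ r) :
    euclidDist x y ≤ √d * r :=
  calc euclidDist x y ≤ √(∑ _ : Fin d, r ^ 2) :=
        Real.sqrt_le_sqrt (Finset.sum_le_sum fun i _ ↦ sq_le_sq' (abs_le.1 (h i)).1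
          (abs_le.1 (h i)).2)
    _ = √d * r := by simp [Real.sqrt_sq hr]

variable {N : ℕ} [NeZero N]

lemma euclidDist_gridFold_sub_single_le (g : Fin d → ZMod (2 * N)) (i : Fin d) :
    euclidDist (gridFold N (g - Pi.single i 1)) (gridFold N g) ≤ 1 / N := by
  have other_eq (j : Fin d) (hj : j ≠ i) :
      (gridFold N (g - Pi.single i 1) j - gridFold N g j) ^ 2 = 0 := by
    simp [gridFold, hj]
  rw [euclidDist, Fintype.sum_eq_single i other_eq, Real.sqrt_sq_eq_abs]
  simp only [gridFold, Pi.sub_apply, Pi.single_eq_same, ← sub_div, abs_div, Nat.abs_cast]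
  gcongr
  exact abs_natAbs_valMinAbs_sub_one_sub_le (g i)

lemma abs_sub_gridFold_gridFloor_le {ι : Type*} {x : ι → ℝ} {i : ι} (hx : x i ∈ Set.Icc 0 1) :
    |x i - gridFold N (gridFloor N x) i| ≤ 1 / N := by
  have hN : (0 : ℝ) < N := Nat.cast_pos.2 (NeZero.pos N)
  rw [gridFold_gridFloor_apply hx.2, sub_div' hN.ne', abs_div, Nat.abs_cast, mul_comm]
  gcongr
  rw [abs_of_nonneg (sub_nonneg.2 (Nat.floor_le (mul_nonneg hN.le hx.1)))]
  linarith [Nat.lt_floor_add_one (N * x i)]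

lemma euclidDist_gridFold_gridFloor_le {x : Fin d → ℝ} (hx : ∀ i, x i ∈ Set.Icc 0 1) :
    euclidDist x (gridFold N (gridFloor N x)) ≤ √d / N := by
  rw [← mul_one_div]
  exact euclidDist_le_sqrt_mul (by positivity) fun i ↦ abs_sub_gridFold_gridFloor_le (hx i)

variable {κ : Type*} [Fintype κ]

lemma sum_sub_comp_gridFold_le {f : (Fin d → ℝ) → ℝ} (hf : ∀ u v, f u - f v ≤ euclidDist u v)
    (p q : κ → Fin d → ZMod (2 * N)) :
    ∑ k, (f (gridFold N (p k)) - f (gridFold N (q k))) ≤ √d / 2 * √(discrepancyEnergy p q) := by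
  have hN : (0 : ℝ) < N := Nat.cast_pos.2 (NeZero.pos N)
  have step_le (g : Fin d → ZMod (2 * N)) (i) :
      ‖(f (gridFold N (g - Pi.single i 1)) : ℂ) - f (gridFold N g)‖ ≤ 1 / N := by
    rw [← Complex.ofReal_sub, Complex.norm_real]
    refine le_trans (abs_sub_le_iff.2 ⟨hf _ _, (hf _ _).trans_eq (euclidDist_comm _ _)⟩)
      (euclidDist_gridFold_sub_single_le g i)
  have sq_le := norm_sum_sub_sq_le_mul_discrepancyEnergy
    (F := fun g ↦ (f (gridFold N g) : ℂ)) step_le p q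
  simp only [← Complex.ofReal_sub, ← Complex.ofReal_sum, Complex.norm_real] at sq_le
  calc ∑ k, (f (gridFold N (p k)) - f (gridFold N (q k)))
      ≤ ‖∑ k, (f (gridFold N (p k)) - f (gridFold N (q k)))‖ := le_abs_self _
    _ ≤ √(d / 2 ^ 2 * discrepancyEnergy p q) := by
        refine Real.le_sqrt_of_sq_le (sq_le.trans_eq ?_)
        rw [Fintype.card_fin]
        push_cast
        field_simp
        ring
    _ = √d / 2 * √(discrepancyEnergy p q) := by
        rw [Real.sqrt_mul (by positivity), Real.sqrt_div d.cast_nonneg, Real.sqrt_sq two_pos.le]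

theorem sum_sub_le_discrepancyEnergy {f : (Fin d → ℝ) → ℝ}
    (hf : ∀ u v, f u - f v ≤ euclidDist u v) {x y : κ → Fin d → ℝ}
    (hx : ∀ k i, x k i ∈ Set.Icc 0 1) (hy : ∀ k i, y k i ∈ Set.Icc 0 1) :
    ∑ k, (f (x k) - f (y k)) ≤ Fintype.card κ * (2 * √d / N) +
      √d / 2 * √(discrepancyEnergy (fun k ↦ gridFloor N (x k)) fun k ↦ gridFloor N (y k)) := by
  have pair_le (k) : f (x k) - f (y k) ≤ 2 * √d / N +
      (f (gridFold N (gridFloor N (x k))) - f (gridFold N (gridFloor N (y k)))) := by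
    have hxk := (hf _ _).trans (euclidDist_gridFold_gridFloor_le (N := N) (hx k))
    have hyk := (hf _ _).trans ((euclidDist_comm _ _).trans_le
      (euclidDist_gridFold_gridFloor_le (N := N) (hy k)))
    rw [mul_div_assoc]
    linarith
  calc ∑ k, (f (x k) - f (y k)) ≤ ∑ k, (2 * √d / N +
        (f (gridFold N (gridFloor N (x k))) - f (gridFold N (gridFloor N (y k))))) :=
        Finset.sum_le_sum fun k _ ↦ pair_le k
    _ ≤ _ := by
        rw [Finset.sum_add_distrib, Finset.sum_const, Finset.card_univ, nsmul_eq_mul]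
        gcongr
        exact sum_sub_comp_gridFold_le hf _ _

theorem W1_empMeasure_le_discrepancyEnergy {Ω : Type*} [MeasurableSpace Ω] {n : ℕ} [NeZero n]
    {X Y : Fin n → Ω → Fin d → ℝ} {ω : Ω} (hX : ∀ k i, X k ω i ∈ Set.Icc 0 1)
    (hY : ∀ k i, Y k ω i ∈ Set.Icc 0 1) :
    W1 (empMeasure X ω) (empMeasure Y ω) ≤ ENNReal.ofReal (2 * √d / N + √d / (2 * n) *
      √(discrepancyEnergy (fun k ↦ gridFloor N (X k ω)) fun k ↦ gridFloor N (Y k ω))) := by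
  have hn : (0 : ℝ) < n := Nat.cast_pos.2 (NeZero.pos n)
  refine W1_empMeasure_le fun f hf ↦ ?_
  rw [div_le_iff₀ hn]
  refine (sum_sub_le_discrepancyEnergy (N := N) hf hX hY).trans_eq ?_
  rw [Fintype.card_fin]
  field_simp

end Discretization
section SecondMoment

variable {κ Ω : Type*} [MeasurableSpace Ω] {P : Measure Ω}

/-- Two samples whose couples `(X k, Y k)` are pairwise independent, with `X k` and `Y k` equal in
law. -/
structure IsPairedSample {α : Type*} [MeasurableSpace α] (P : Measure Ω) (X Y : κ → Ω → α) :
    Prop where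
  measurable_left : ∀ k, Measurable (X k)
  measurable_right : ∀ k, Measurable (Y k)
  indep : Pairwise fun j k ↦ IndepFun (fun ω ↦ (X j ω, Y j ω)) (fun ω ↦ (X k ω, Y k ω)) P
  map_eq : ∀ k, P.map (X k) = P.map (Y k)

variable {α : Type*} [MeasurableSpace α] {X Y : κ → Ω → α}

lemma IsPairedSample.comp {β : Type*} [MeasurableSpace β] (h : IsPairedSample P X Y) {φ : α → β}
    (hφ : Measurable φ) : IsPairedSample P (fun k ω ↦ φ (X k ω)) fun k ω ↦ φ (Y k ω) where
  measurable_left k := hφ.comp (h.measurable_left k)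
  measurable_right k := hφ.comp (h.measurable_right k)
  indep _ _ hjk := (h.indep hjk).comp (hφ.prodMap hφ) (hφ.prodMap hφ)
  map_eq k := by
    have := congrArg (Measure.map φ) (h.map_eq k)
    rwa [Measure.map_map hφ (h.measurable_left k), Measure.map_map hφ (h.measurable_right k)]
      at this

lemma memLp_sqrt {f : Ω → ℝ} (hf : Integrable f P) (hf_nonneg : ∀ ω, 0 ≤ f ω) :
    MemLp (fun ω ↦ √(f ω)) 2 P := by
  rw [memLp_two_iff_integrable_sq hf.aemeasurable.sqrt.aestronglyMeasurable]
  simpa only [Real.sq_sqrt (hf_nonneg _)] using hf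

variable [Fintype κ]

theorem integral_norm_sum_sq_of_pairwise_indepFun {E : Type*} [NormedAddCommGroup E]
    [InnerProductSpace ℝ E] [CompleteSpace E] [MeasurableSpace E] [BorelSpace E]
    [IsFiniteMeasure P] {Z : κ → Ω → E} (memLp : ∀ k, MemLp (Z k) 2 P)
    (centred : ∀ k, ∫ ω, Z k ω ∂P = 0) (indep : Pairwise fun j k ↦ IndepFun (Z j) (Z k) P) :
    ∫ ω, ‖∑ k, Z k ω‖ ^ 2 ∂P = ∑ k, ∫ ω, ‖Z k ω‖ ^ 2 ∂P := by
  have integrable (k) : Integrable (Z k) P := (memLp k).integrable one_le_two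
  have integrable_inner (j k) : Integrable (fun ω ↦ inner ℝ (Z j ω) (Z k ω)) P := by
    rcases eq_or_ne j k with rfl | hjk
    · simpa only [real_inner_self_eq_norm_sq] using (memLp j).integrable_norm_pow two_ne_zero
    · exact (indep hjk).integrable_bilin (integrable j) (integrable k) (innerSL ℝ)
  have orthogonal (j k) (hkj : k ≠ j) : ∫ ω, inner ℝ (Z k ω) (Z j ω) ∂P = 0 :=
    ((indep hkj).integral_bilin (integrable k) (integrable j) (innerSL ℝ)).trans
      (by rw [centred j, map_zero])
  simp only [← real_inner_self_eq_norm_sq, sum_inner, inner_sum]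
  rw [integral_finsetSum _ fun j _ ↦ integrable_finsetSum _ fun k _ ↦ integrable_inner k j]
  refine Finset.sum_congr rfl fun j _ ↦ ?_
  rw [integral_finsetSum _ fun k _ ↦ integrable_inner k j, Fintype.sum_eq_single j (orthogonal j)]

variable [IsProbabilityMeasure P]

theorem IsPairedSample.integral_norm_sum_sub_sq_le {U V : κ → Ω → ℂ} (h : IsPairedSample P U V)
    (hU : ∀ k ω, ‖U k ω‖ ≤ 1) (hV : ∀ k ω, ‖V k ω‖ ≤ 1) :
    ∫ ω, ‖∑ k, (U k ω - V k ω)‖ ^ 2 ∂P ≤ 4 * Fintype.card κ := by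
  have memLp_sub (k) : MemLp (fun ω ↦ U k ω - V k ω) 2 P :=
    .sub (.of_bound (h.measurable_left k).aestronglyMeasurable 1 (ae_of_all _ (hU k)))
      (.of_bound (h.measurable_right k).aestronglyMeasurable 1 (ae_of_all _ (hV k)))
  have centred (k) : ∫ ω, (U k ω - V k ω) ∂P = 0 := by
    have same_law : IdentDistrib (U k) (V k) P P :=
      ⟨(h.measurable_left k).aemeasurable, (h.measurable_right k).aemeasurable, h.map_eq k⟩
    rw [integral_sub (.of_bound (h.measurable_left k).aestronglyMeasurable 1 (ae_of_all _ (hU k)))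
      (.of_bound (h.measurable_right k).aestronglyMeasurable 1 (ae_of_all _ (hV k))),
      same_law.integral_eq, sub_self]
  have indep : Pairwise fun j k ↦
      IndepFun (fun ω ↦ U j ω - V j ω) (fun ω ↦ U k ω - V k ω) P := fun j k hjk ↦
    (h.indep hjk).comp (measurable_fst.sub measurable_snd) (measurable_fst.sub measurable_snd)
  have norm_le (k ω) : ‖U k ω - V k ω‖ ^ 2 ≤ 4 := by
    nlinarith [norm_nonneg (U k ω - V k ω), norm_sub_le (U k ω) (V k ω), hU k ω, hV k ω]
  calc ∫ ω, ‖∑ k, (U k ω - V k ω)‖ ^ 2 ∂P = ∑ k, ∫ ω, ‖U k ω - V k ω‖ ^ 2 ∂P :=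
        integral_norm_sum_sq_of_pairwise_indepFun memLp_sub centred indep
    _ ≤ ∑ _ : κ, (4 : ℝ) := Finset.sum_le_sum fun k _ ↦ by
        simpa using integral_mono ((memLp_sub k).integrable_norm_pow two_ne_zero)
          (integrable_const (μ := P) 4) (norm_le k)
    _ = 4 * Fintype.card κ := by simp [mul_comm]

lemma integral_sqrt_le_sqrt_integral {f : Ω → ℝ} (hf : Integrable f P)
    (hf_nonneg : ∀ ω, 0 ≤ f ω) : ∫ ω, √(f ω) ∂P ≤ √(∫ ω, f ω ∂P) :=
  Real.strictConcaveOn_sqrt.concaveOn.le_map_integral Real.continuous_sqrt.continuousOn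
    isClosed_Ici (ae_of_all _ hf_nonneg) hf ((memLp_sqrt hf hf_nonneg).integrable one_le_two)

end SecondMoment

section ExpectedTransport

variable {κ Ω : Type*} [Fintype κ] [MeasurableSpace Ω] {P : Measure Ω} [IsProbabilityMeasure P]

section Energy

variable {ι : Type*} [Fintype ι] {M : ℕ} [NeZero M] {p q : κ → Ω → ι → ZMod M}

lemma IsPairedSample.integrable_norm_charDiscrepancy_sq (h : IsPairedSample P p q)
    (m : ι → ZMod M) :
    Integrable (fun ω ↦ ‖charDiscrepancy (fun k ↦ p k ω) (fun k ↦ q k ω) m‖ ^ 2) P := by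
  have hχ : Measurable (gridChar m) := .of_discrete
  have memLp_char {r : Ω → ι → ZMod M} (hr : Measurable r) :
      MemLp (fun ω ↦ gridChar m (r ω)) 2 P :=
    .of_bound (hχ.comp hr).aestronglyMeasurable 1 (ae_of_all _ fun ω ↦ (AddChar.norm_apply _ _).le)
  exact (memLp_finsetSum _ fun k _ ↦ (memLp_char (h.measurable_left k)).sub
    (memLp_char (h.measurable_right k))).integrable_norm_pow two_ne_zero

variable [DecidableEq ι]

lemma IsPairedSample.integrable_discrepancyEnergy (h : IsPairedSample P p q) :
    Integrable (fun ω ↦ discrepancyEnergy (fun k ↦ p k ω) fun k ↦ q k ω) P :=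
  integrable_finsetSum _ fun m _ ↦ (h.integrable_norm_charDiscrepancy_sq m).div_const _

theorem IsPairedSample.integral_discrepancyEnergy_le (h : IsPairedSample P p q) :
    ∫ ω, discrepancyEnergy (fun k ↦ p k ω) (fun k ↦ q k ω) ∂P
      ≤ 4 * Fintype.card κ * ∑ m : ι → ZMod M, 1 / sqFreq m := by
  simp only [discrepancyEnergy, Finset.mul_sum, mul_one_div]
  rw [integral_finsetSum _ fun m _ ↦ (h.integrable_norm_charDiscrepancy_sq m).div_const _]
  refine Finset.sum_le_sum fun m _ ↦ ?_
  rw [integral_div]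
  refine div_le_div_of_nonneg_right ?_ (sqFreq_nonneg m)
  exact (h.comp (φ := gridChar m) .of_discrete).integral_norm_sum_sub_sq_le
    (fun _ _ ↦ (AddChar.norm_apply _ _).le) fun _ _ ↦ (AddChar.norm_apply _ _).le

theorem IsPairedSample.integral_sqrt_discrepancyEnergy_le (h : IsPairedSample P p q) :
    ∫ ω, √(discrepancyEnergy (fun k ↦ p k ω) fun k ↦ q k ω) ∂P
      ≤ 2 * Fintype.card κ * √((∑ m : ι → ZMod M, 1 / sqFreq m) / Fintype.card κ) := by
  set n : ℝ := (Fintype.card κ : ℝ)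
  set K : ℝ := ∑ m : ι → ZMod M, 1 / sqFreq m
  have rescale : 4 * n * K = (2 * n) ^ 2 * (K / n) := by
    rcases eq_or_ne n 0 with h0 | h0
    · simp [h0]
    · field_simp
      ring
  calc ∫ ω, √(discrepancyEnergy (fun k ↦ p k ω) fun k ↦ q k ω) ∂P
      ≤ √(∫ ω, discrepancyEnergy (fun k ↦ p k ω) (fun k ↦ q k ω) ∂P) :=
        integral_sqrt_le_sqrt_integral h.integrable_discrepancyEnergy
          fun ω ↦ discrepancyEnergy_nonneg _ _
    _ ≤ √((2 * n) ^ 2 * (K / n)) := by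
        rw [← rescale]
        exact Real.sqrt_le_sqrt h.integral_discrepancyEnergy_le
    _ = 2 * n * √(K / n) := by
        rw [Real.sqrt_mul (by positivity), Real.sqrt_sq (by positivity)]

end Energy

theorem lintegral_W1_empMeasure_le {d n N : ℕ} [NeZero n] [NeZero N]
    {X Y : Fin n → Ω → Fin d → ℝ} (h : IsPairedSample P X Y)
    (hX : ∀ k ω i, X k ω i ∈ Set.Icc 0 1) (hY : ∀ k ω i, Y k ω i ∈ Set.Icc 0 1) :
    ∫⁻ ω, W1 (empMeasure X ω) (empMeasure Y ω) ∂P ≤ ENNReal.ofReal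
      (2 * √d / N + √d * √((∑ m : Fin d → ZMod (2 * N), 1 / sqFreq m) / n)) := by
  have hn : (0 : ℝ) < n := Nat.cast_pos.2 (NeZero.pos n)
  have grid_sample := h.comp (measurable_gridFloor N)
  set energy : Ω → ℝ := fun ω ↦
    discrepancyEnergy (fun k ↦ gridFloor N (X k ω)) fun k ↦ gridFloor N (Y k ω)
  have sqrt_integrable : Integrable (fun ω ↦ √(energy ω)) P :=
    (memLp_sqrt grid_sample.integrable_discrepancyEnergy
      fun ω ↦ discrepancyEnergy_nonneg _ _).integrable one_le_two
  have integral_sqrt_le := grid_sample.integral_sqrt_discrepancyEnergy_le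
  rw [Fintype.card_fin] at integral_sqrt_le
  calc ∫⁻ ω, W1 (empMeasure X ω) (empMeasure Y ω) ∂P
      ≤ ∫⁻ ω, ENNReal.ofReal (2 * √d / N + √d / (2 * n) * √(energy ω)) ∂P :=
        lintegral_mono fun ω ↦ W1_empMeasure_le_discrepancyEnergy (hX · ω) (hY · ω)
    _ = ENNReal.ofReal (∫ ω, (2 * √d / N + √d / (2 * n) * √(energy ω)) ∂P) :=
        (ofReal_integral_eq_lintegral_ofReal ((integrable_const _).add
          (sqrt_integrable.const_mul _))
          (ae_of_all _ fun ω ↦ add_nonneg (by positivity) (by positivity))).symm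
    _ = ENNReal.ofReal (2 * √d / N + √d / (2 * n) * ∫ ω, √(energy ω) ∂P) := by
        rw [integral_add (integrable_const _) (sqrt_integrable.const_mul _), integral_const_mul,
          integral_const, probReal_univ, one_smul]
    _ ≤ _ := by
        refine ENNReal.ofReal_le_ofReal ?_
        grw [integral_sqrt_le]
        exact le_of_eq (by field_simp)

end ExpectedTransport

section FrequencySum

variable {ι : Type*} [Fintype ι] {M : ℕ}

/-- The sup-norm of a frequency, each coordinate being represented in `(-M/2, M/2]`. -/
def supFreq (m : ι → ZMod M) : ℕ := Finset.univ.sup fun i ↦ (m i).valMinAbs.natAbs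

lemma natAbs_valMinAbs_le_supFreq (m : ι → ZMod M) (i : ι) :
    (m i).valMinAbs.natAbs ≤ supFreq m :=
  Finset.le_sup (f := fun i ↦ (m i).valMinAbs.natAbs) (Finset.mem_univ i)

lemma exists_natAbs_valMinAbs_eq_supFreq [Nonempty ι] (m : ι → ZMod M) :
    ∃ i, (m i).valMinAbs.natAbs = supFreq m := by
  obtain ⟨i, -, hi⟩ := Finset.exists_mem_eq_sup Finset.univ Finset.univ_nonempty
    fun i ↦ (m i).valMinAbs.natAbs
  exact ⟨i, hi.symm⟩

lemma supFreq_pos {m : ι → ZMod M} (hm : m ≠ 0) : 0 < supFreq m := by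
  obtain ⟨i, hi⟩ := Function.ne_iff.1 hm
  have : (m i).valMinAbs ≠ 0 := by rwa [Ne, ZMod.valMinAbs_eq_zero]
  exact (Int.natAbs_pos.2 this).trans_le (natAbs_valMinAbs_le_supFreq m i)

lemma supFreq_sq_le_sqFreq [Nonempty ι] (m : ι → ZMod M) : (supFreq m : ℝ) ^ 2 ≤ sqFreq m := by
  obtain ⟨i, hi⟩ := exists_natAbs_valMinAbs_eq_supFreq m
  rw [← hi, Nat.cast_natAbs, Int.cast_abs, sq_abs]
  exact Finset.single_le_sum (f := fun i ↦ ((m i).valMinAbs : ℝ) ^ 2) (fun _ _ ↦ sq_nonneg _)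
    (Finset.mem_univ i)

variable [NeZero M]

lemma card_natAbs_valMinAbs_eq_le (r : ℕ) :
    (Finset.univ.filter fun a : ZMod M ↦ a.valMinAbs.natAbs = r).card ≤ 2 := by
  refine (Finset.card_le_card_of_injOn (t := {(r : ℤ), -(r : ℤ)}) ZMod.valMinAbs (fun a ha ↦ ?_)
    ZMod.injective_valMinAbs.injOn).trans Finset.card_le_two
  simpa [Int.natAbs_eq_iff] using ha

lemma card_natAbs_valMinAbs_le_le (r : ℕ) :
    (Finset.univ.filter fun a : ZMod M ↦ a.valMinAbs.natAbs ≤ r).card ≤ 2 * r + 1 := by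
  refine (Finset.card_le_card_of_injOn (t := Finset.Icc (-r : ℤ) r) ZMod.valMinAbs (fun a ha ↦ ?_)
    ZMod.injective_valMinAbs.injOn).trans ?_
  · have : a.valMinAbs.natAbs ≤ r := by simpa using ha
    rw [Finset.coe_Icc, Set.mem_Icc]
    lia
  · rw [Int.card_Icc]
    lia

lemma supFreq_le_half (m : ι → ZMod M) : supFreq m ≤ M / 2 :=
  Finset.sup_le fun i _ ↦ ZMod.natAbs_valMinAbs_le (m i)

variable [Nonempty ι] [DecidableEq ι]

lemma card_supFreq_eq_le {r : ℕ} (hr : 0 < r) :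
    (Finset.univ.filter fun m : ι → ZMod M ↦ supFreq m = r).card
      ≤ Fintype.card ι * (2 * (3 * r) ^ (Fintype.card ι - 1)) := by
  let face (i j : ι) : Finset (ZMod M) :=
    if j = i then Finset.univ.filter fun a ↦ a.valMinAbs.natAbs = r
    else Finset.univ.filter fun a ↦ a.valMinAbs.natAbs ≤ r
  have card_face (i : ι) :
      (Fintype.piFinset (face i)).card ≤ 2 * (3 * r) ^ (Fintype.card ι - 1) := by
    rw [Fintype.card_piFinset, ← Finset.mul_prod_erase _ _ (Finset.mem_univ i)]
    refine Nat.mul_le_mul (by simpa [face] using card_natAbs_valMinAbs_eq_le r) ?_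
    rw [← Finset.card_univ, ← Finset.card_erase_of_mem (Finset.mem_univ i)]
    refine Finset.prod_le_pow_card _ _ _ fun j hj ↦ ?_
    rw [show face i j = _ from if_neg (Finset.ne_of_mem_erase hj)]
    exact (card_natAbs_valMinAbs_le_le r).trans (by lia)
  have subset_faces : (Finset.univ.filter fun m : ι → ZMod M ↦ supFreq m = r)
      ⊆ Finset.univ.biUnion fun i ↦ Fintype.piFinset (face i) := by
    intro m hm
    obtain rfl : supFreq m = r := by simpa using hm
    obtain ⟨i, hi⟩ := exists_natAbs_valMinAbs_eq_supFreq m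
    refine Finset.mem_biUnion.2 ⟨i, Finset.mem_univ i, Fintype.mem_piFinset.2 fun j ↦ ?_⟩
    by_cases hj : j = i
    · simp [face, hj, hi]
    · simp [face, hj, natAbs_valMinAbs_le_supFreq]
  exact (Finset.card_le_card subset_faces).trans
    (Finset.card_biUnion_le_card_mul _ _ _ fun i _ ↦ card_face i)

theorem sum_one_div_sqFreq_le :
    ∑ m : ι → ZMod M, 1 / sqFreq m ≤ 2 * Fintype.card ι * 3 ^ (Fintype.card ι - 1) *
      ∑ r ∈ Finset.Icc 1 (M / 2), (r : ℝ) ^ (Fintype.card ι - 1) / r ^ 2 := by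
  have shell_le (r : ℕ) (hr : 0 < r) :
      ∑ m : ι → ZMod M with supFreq m = r, 1 / sqFreq m
        ≤ 2 * Fintype.card ι * 3 ^ (Fintype.card ι - 1) * (r ^ (Fintype.card ι - 1) / r ^ 2) :=
    calc ∑ m : ι → ZMod M with supFreq m = r, 1 / sqFreq m
        ≤ ∑ m : ι → ZMod M with supFreq m = r, 1 / (r : ℝ) ^ 2 := by
          refine Finset.sum_le_sum fun m hm ↦ one_div_le_one_div_of_le (by positivity) ?_
          rw [← (Finset.mem_filter.1 hm).2]
          exact supFreq_sq_le_sqFreq m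
      _ ≤ (Fintype.card ι * (2 * (3 * r) ^ (Fintype.card ι - 1)) : ℕ) * (1 / (r : ℝ) ^ 2) := by
          rw [Finset.sum_const, nsmul_eq_mul]
          gcongr
          exact card_supFreq_eq_le hr
      _ = _ := by
          push_cast
          ring
  have zero_term : 1 / sqFreq (0 : ι → ZMod M) = 0 := by simp [sqFreq]
  have maps_to : ∀ m ∈ Finset.univ.erase (0 : ι → ZMod M), supFreq m ∈ Finset.Icc 1 (M / 2) :=
    fun m hm ↦ Finset.mem_Icc.2 ⟨supFreq_pos (Finset.ne_of_mem_erase hm), supFreq_le_half m⟩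
  rw [← Finset.sum_erase (f := fun m ↦ 1 / sqFreq m) _ zero_term,
    ← Finset.sum_fiberwise_of_maps_to maps_to, Finset.mul_sum]
  refine Finset.sum_le_sum fun r hr ↦ le_trans ?_ (shell_le r (Finset.mem_Icc.1 hr).1)
  exact Finset.sum_le_sum_of_subset_of_nonneg
    (Finset.filter_subset_filter _ (Finset.erase_subset _ _))
    fun m _ _ ↦ one_div_nonneg.2 (sqFreq_nonneg m)

variable (N : ℕ) [NeZero N]

lemma sum_one_div_sqFreq_one_le : ∑ m : Fin 1 → ZMod (2 * N), 1 / sqFreq m ≤ 4 := by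
  have sum_inv_sq_le : ∑ r ∈ Finset.Icc 1 N, ((r : ℝ) ^ 2)⁻¹ ≤ 2 :=
    (sum_Ioo_inv_sq_le 0 (N + 1)).trans (by norm_num)
  calc ∑ m : Fin 1 → ZMod (2 * N), 1 / sqFreq m ≤ 2 * ∑ r ∈ Finset.Icc 1 N, ((r : ℝ) ^ 2)⁻¹ := by
        simpa using sum_one_div_sqFreq_le (M := 2 * N) (ι := Fin 1)
    _ ≤ 4 := by linarith

lemma sum_one_div_sqFreq_two_le :
    ∑ m : Fin 2 → ZMod (2 * N), 1 / sqFreq m ≤ 12 * (1 + Real.log N) := by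
  have harmonic_le : ∑ r ∈ Finset.Icc 1 N, (r : ℝ)⁻¹ ≤ 1 + Real.log N := by
    simpa [harmonic_eq_sum_Icc] using harmonic_le_one_add_log N
  have shell_sum : ∑ r ∈ Finset.Icc 1 N, (r : ℝ) / r ^ 2 = ∑ r ∈ Finset.Icc 1 N, (r : ℝ)⁻¹ :=
    Finset.sum_congr rfl fun r _ ↦ by rw [sq, div_self_mul_self']
  calc ∑ m : Fin 2 → ZMod (2 * N), 1 / sqFreq m ≤ 12 * ∑ r ∈ Finset.Icc 1 N, (r : ℝ) / r ^ 2 := by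
        have := sum_one_div_sqFreq_le (M := 2 * N) (ι := Fin 2)
        norm_num at this ⊢
        exact this
    _ ≤ 12 * (1 + Real.log N) := by rw [shell_sum]; gcongr

lemma sum_one_div_sqFreq_le_pow {d : ℕ} (hd : 3 ≤ d) :
    ∑ m : Fin d → ZMod (2 * N), 1 / sqFreq m ≤ 2 * d * 3 ^ (d - 1) * (N : ℝ) ^ (d - 2) := by
  have : Nonempty (Fin d) := ⟨⟨0, by lia⟩⟩
  have sum_pow_le : ∑ r ∈ Finset.Icc 1 N, (r : ℝ) ^ (d - 1) / r ^ 2 ≤ (N : ℝ) ^ (d - 2) := by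
    obtain ⟨e, rfl⟩ := Nat.exists_eq_add_of_le' hd
    calc ∑ r ∈ Finset.Icc 1 N, (r : ℝ) ^ (e + 2) / r ^ 2
        ≤ ∑ _ ∈ Finset.Icc 1 N, (N : ℝ) ^ e := by
          refine Finset.sum_le_sum fun r hr ↦ ?_
          obtain ⟨hr_pos, hrN⟩ := Finset.mem_Icc.1 hr
          rw [pow_add, mul_div_cancel_right₀ _ (by positivity)]
          gcongr
      _ = (N : ℝ) ^ (e + 1) := by simp [pow_succ']
  refine sum_one_div_sqFreq_le.trans ?_
  rw [Fintype.card_fin, Nat.mul_div_cancel_left _ two_pos]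
  gcongr

end FrequencySum

section Rates

variable {Ω : Type*} [MeasurableSpace Ω] {P : Measure Ω} [IsProbabilityMeasure P] {n : ℕ}

theorem lintegral_W1_empMeasure_le_of_dim_one [NeZero n] {X Y : Fin n → Ω → Fin 1 → ℝ}
    (h : IsPairedSample P X Y) (hX : ∀ k ω i, X k ω i ∈ Set.Icc 0 1)
    (hY : ∀ k ω i, Y k ω i ∈ Set.Icc 0 1) :
    ∫⁻ ω, W1 (empMeasure X ω) (empMeasure Y ω) ∂P ≤ ENNReal.ofReal (4 / √n) := by
  have hn : (1 : ℝ) ≤ n := Nat.one_le_cast.2 (NeZero.pos n)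
  have sqrt_n_le : √(n : ℝ) ≤ n := Real.sqrt_le_self_iff.2 (.inr hn)
  refine (lintegral_W1_empMeasure_le (N := n) h hX hY).trans (ENNReal.ofReal_le_ofReal ?_)
  calc _ = 2 / n + √((∑ m : Fin 1 → ZMod (2 * n), 1 / sqFreq m) / n) := by simp
    _ ≤ 2 / √n + √(2 ^ 2 / n) := by
        grw [sum_one_div_sqFreq_one_le, sqrt_n_le]
        norm_num
    _ = 4 / √n := by
        rw [Real.sqrt_div (by positivity), Real.sqrt_sq two_pos.le]
        ring

theorem lintegral_W1_empMeasure_le_of_dim_two (hn : 2 ≤ n) {X Y : Fin n → Ω → Fin 2 → ℝ}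
    (h : IsPairedSample P X Y) (hX : ∀ k ω i, X k ω i ∈ Set.Icc 0 1)
    (hY : ∀ k ω i, Y k ω i ∈ Set.Icc 0 1) :
    ∫⁻ ω, W1 (empMeasure X ω) (empMeasure Y ω) ∂P
      ≤ ENNReal.ofReal (8 * √2 * √(Real.log n / n)) := by
  have : NeZero n := ⟨by lia⟩
  have hn_two : (2 : ℝ) ≤ n := by exact_mod_cast hn
  have half_le_log : 1 / 2 ≤ Real.log n := by
    linarith [Real.log_two_gt_d9, Real.log_le_log two_pos hn_two]
  have mesh_le : 1 / (n : ℝ) ≤ √(Real.log n / n) := by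
    refine Real.le_sqrt_of_sq_le ?_
    rw [div_pow, div_le_div_iff₀ (by positivity) (by positivity)]
    nlinarith
  refine (lintegral_W1_empMeasure_le (N := n) h hX hY).trans (ENNReal.ofReal_le_ofReal ?_)
  calc _ = 2 * √2 * (1 / n) + √2 * √((∑ m : Fin 2 → ZMod (2 * n), 1 / sqFreq m) / n) := by
        rw [mul_one_div, Nat.cast_ofNat]
    _ ≤ 2 * √2 * √(Real.log n / n) + √2 * √(6 ^ 2 * Real.log n / n) := by
        grw [mesh_le, sum_one_div_sqFreq_two_le n,
          (by linarith : 12 * (1 + Real.log n) ≤ 6 ^ 2 * Real.log n)]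
    _ = 8 * √2 * √(Real.log n / n) := by
        rw [mul_div_assoc, Real.sqrt_mul (by positivity), Real.sqrt_sq (by positivity)]
        ring

lemma sum_one_div_sqFreq_div_pow_le {d N : ℕ} [NeZero N] (hd : 3 ≤ d) {s : ℝ} (hs : 0 < s)
    (hN : N ≤ 2 * s) :
    (∑ m : Fin d → ZMod (2 * N), 1 / sqFreq m) / s ^ d ≤ d * 6 ^ (d - 1) / s ^ 2 := by
  grw [sum_one_div_sqFreq_le_pow N hd, hN]
  obtain ⟨e, rfl⟩ := Nat.exists_eq_add_of_le' hd
  refine le_of_eq ?_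
  simp only [Nat.add_succ_sub_one, Nat.reduceSubDiff, mul_pow, (by norm_num : (6 : ℝ) = 2 * 3)]
  field_simp
  ring

theorem lintegral_W1_empMeasure_le_of_three_le_dim {d : ℕ} (hd : 3 ≤ d) [NeZero n]
    {X Y : Fin n → Ω → Fin d → ℝ} (h : IsPairedSample P X Y)
    (hX : ∀ k ω i, X k ω i ∈ Set.Icc 0 1) (hY : ∀ k ω i, Y k ω i ∈ Set.Icc 0 1) :
    ∫⁻ ω, W1 (empMeasure X ω) (empMeasure Y ω) ∂P
      ≤ ENNReal.ofReal ((2 * √d + d * √(6 ^ (d - 1))) / (n : ℝ) ^ (1 / d : ℝ)) := by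
  have hn : (1 : ℝ) ≤ n := Nat.one_le_cast.2 (NeZero.pos n)
  set s : ℝ := (n : ℝ) ^ (1 / d : ℝ) with hs
  have one_le_s : 1 ≤ s := Real.one_le_rpow hn (by positivity)
  have s_pow : s ^ d = n := by
    rw [hs, one_div, Real.rpow_inv_natCast_pow n.cast_nonneg (by lia)]
  have s_le_ceil : s ≤ ⌈s⌉₊ := Nat.le_ceil s
  have ceil_le : (⌈s⌉₊ : ℝ) ≤ 2 * s := by linarith [Nat.ceil_lt_add_one (by positivity : 0 ≤ s)]
  have : NeZero ⌈s⌉₊ := ⟨(Nat.ceil_pos.2 (by positivity)).ne'⟩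
  refine (lintegral_W1_empMeasure_le (N := ⌈s⌉₊) h hX hY).trans (ENNReal.ofReal_le_ofReal ?_)
  calc 2 * √d / ⌈s⌉₊ + √d * √((∑ m : Fin d → ZMod (2 * ⌈s⌉₊), 1 / sqFreq m) / n)
      ≤ 2 * √d / s + √d * √(d * 6 ^ (d - 1) / s ^ 2) := by
        grw [← s_pow, ← s_le_ceil, sum_one_div_sqFreq_div_pow_le hd (by positivity) ceil_le]
    _ = 2 * √d / s + √d * √d * √(6 ^ (d - 1)) / s := by
        rw [Real.sqrt_div (by positivity), Real.sqrt_mul d.cast_nonneg,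
          Real.sqrt_sq (by positivity)]
        ring
    _ = (2 * √d + d * √(6 ^ (d - 1))) / s := by
        rw [Real.mul_self_sqrt d.cast_nonneg, add_div]

end Rates

/-- Theorem 3: rates of convergence for the expected Kantorovich distance between
the two empirical measures of pairwise independent, coordinatewise equidistributed
samples in `[0,1]^d`. -/
theorem expected_W1_rate (d : ℕ) :
    ∃ C : ℝ, 0 < C ∧
      ∀ (n : ℕ), 2 ≤ n →
      ∀ (Ω : Type) (_ : MeasurableSpace Ω) (P : Measure Ω), IsProbabilityMeasure P →
      ∀ (X Y : Fin n → Ω → (Fin d → ℝ)),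
        (∀ k, Measurable (X k)) → (∀ k, Measurable (Y k)) →
        (∀ k ω i, X k ω i ∈ Set.Icc (0 : ℝ) 1) →
        (∀ k ω i, Y k ω i ∈ Set.Icc (0 : ℝ) 1) →
        (∀ j k, j ≠ k →
          IndepFun (fun ω => (X j ω, Y j ω)) (fun ω => (X k ω, Y k ω)) P) →
        (∀ k, P.map (X k) = P.map (Y k)) →
        (d = 1 →
          ∫⁻ ω, W1 (empMeasure X ω) (empMeasure Y ω) ∂P
            ≤ ENNReal.ofReal (C / Real.sqrt n)) ∧
        (d = 2 →
          ∫⁻ ω, W1 (empMeasure X ω) (empMeasure Y ω) ∂P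
            ≤ ENNReal.ofReal (C * Real.sqrt (Real.log n / n))) ∧
        (3 ≤ d →
          ∫⁻ ω, W1 (empMeasure X ω) (empMeasure Y ω) ∂P
            ≤ ENNReal.ofReal (C / (n : ℝ) ^ (1 / d : ℝ))) := by
  set C₃ : ℝ := 2 * √d + d * √(6 ^ (d - 1))
  have C₃_nonneg : 0 ≤ C₃ := by positivity
  refine ⟨4 + 8 * √2 + C₃, by positivity, ?_⟩
  intro n hn Ω _ P _ X Y measX measY hX hY indep map_eq
  have : NeZero n := ⟨by lia⟩
  have sample : IsPairedSample P X Y := ⟨measX, measY, indep, map_eq⟩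
  refine ⟨?_, ?_, fun hd ↦ ?_⟩
  · rintro rfl
    refine (lintegral_W1_empMeasure_le_of_dim_one sample hX hY).trans (ENNReal.ofReal_le_ofReal ?_)
    gcongr
    linarith [Real.sqrt_nonneg 2]
  · rintro rfl
    refine (lintegral_W1_empMeasure_le_of_dim_two hn sample hX hY).trans
      (ENNReal.ofReal_le_ofReal ?_)
    gcongr
    linarith
  · refine (lintegral_W1_empMeasure_le_of_three_le_dim hd sample hX hY).trans
      (ENNReal.ofReal_le_ofReal ?_)
    refine div_le_div_of_nonneg_right ?_ (by positivity)
    linarith [Real.sqrt_nonneg 2]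
end
end
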